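/- arXiv:0806.0786 — 3 statements merged into one kernel-verified Lean document; each statement's English description precedes it below -/
import Mathlib

section
/- Assume the Riemann Hypothesis. There exist τ₀ > 0 such that for all t with |t| + 3 ≥ τ₀ and all σ with 1/2 ≤ σ, writing τ = |t| + 3, one has log⁺|ζ(σ + it)| ≤ (2/5) · (log τ / log log τ). -/
/-!
Write `τ = |t| + 3` and `ξ(s) = s (s - 1) Λ(s)`. The proof bounds `Re ζ′/ζ` from below to the right
of the critical line, sharpens this by convexity, and integrates from `σ` to a line just right of `1`.

Under RH, `ξ (s - 2 a) / ξ s` is holomorphic for `Re s ≥ 1/2 + a` and unimodular on the boundary line,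
by the functional equation. It is bounded far to the right, and has admissible growth because `ξ`
cannot be too small (Borel–Carathéodory, `xi_lower`). Phragmén–Lindelöf then shows that `|ξ|` is
nondecreasing along horizontal lines (`xi_mono`). Removing the Gamma factor and differentiating gives
`Re ζ′/ζ ≥ -N` with `N = ½ log τ + O(1)` (`logDeriv_zeta_lower`).

The Möbius transform `φ = g / (g + 2 N)` of `g = ζ′/ζ` therefore satisfies `|φ| ≤ 1` for `Re s > 1/2`,
while `|φ| = O(1 / N)` on `Re s = 51/50`, where `ζ′/ζ` is bounded. Interpolating between the two lines
(`rect_bound`) yields `|φ(σ + it)| ≤ e^κ y` with `y = exp (-L (σ - 1/2))` and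
`L = log (N / C) / (13/25)`, that is, `Re ζ′/ζ ≥ -2 N e^κ y / (1 + y)`. Integrating in `σ`
(`log_norm_bound`) gives
`log |ζ(σ + it)| ≤ O(1) + (2 N e^κ / L) log 2 ~ e^κ (13/25) (log 2) log τ / log log τ`,
and with `κ = 1/100` the constant is about `0.364`, below `2/5`. The line `σ = 1/2` follows by
continuity, and `σ ≥ 51/50` is the region of absolute convergence.
-/

open Complex

/-- `log⁺|x|`, which is `0` if `|x| < 1` and `log |x|` if `|x| ≥ 1`. -/
noncomputable def logPlus (x : ℝ) : ℝ := if |x| < 1 then 0 else Real.log |x|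

/-! ### The completed zeta function -/

/-- The entire completed zeta function `s (s - 1) Λ(s)` (twice the classical `ξ`), written through
the entire function `Λ₀(s) = Λ(s) + 1/s + 1/(1 - s)` so that there are no junk values at the poles
`0` and `1` of `Λ`. -/
noncomputable def xi (s : ℂ) : ℂ := s * (s - 1) * completedRiemannZeta₀ s + 1

lemma differentiable_xi : Differentiable ℂ xi := by
  have := differentiable_completedZeta₀
  unfold xi
  fun_prop

lemma xi_one_sub (s : ℂ) : xi (1 - s) = xi s := by
  simp only [xi, completedRiemannZeta₀_one_sub]
  ring

lemma xi_eq {s : ℂ} (hs : 0 < s.re) (h1 : s ≠ 1) :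
    xi s = s * (s - 1) * Gammaℝ s * riemannZeta s := by
  have h0 : s ≠ 0 := by rintro rfl; simp at hs
  have hG := Gammaℝ_ne_zero_of_re_pos hs
  have h1' : 1 - s ≠ 0 := sub_ne_zero.mpr (Ne.symm h1)
  rw [riemannZeta_def_of_ne_zero h0, completedRiemannZeta_eq, xi]
  field_simp
  ring

/-- `RiemannHypothesis` only places the nontrivial zeros on the critical line; the trivial ones
are excluded here because they have negative real part. -/
lemma zeta_ne_zero (hRH : RiemannHypothesis) {s : ℂ} (hs : 1 / 2 < s.re) (h1 : s ≠ 1) :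
    riemannZeta s ≠ 0 := by
  intro h
  have := hRH s h ?_ h1
  · linarith
  · rintro ⟨n, rfl⟩
    have : ((-2 * ((n : ℂ) + 1)).re) = -2 * ((n : ℝ) + 1) := by simp
    rw [this] at hs
    have : (0 : ℝ) ≤ n := n.cast_nonneg
    linarith

lemma xi_ne_zero (hRH : RiemannHypothesis) {s : ℂ} (hs : 1 / 2 < s.re) : xi s ≠ 0 := by
  by_cases h1 : s = 1
  · simp [h1, xi]
  · rw [xi_eq (by linarith) h1]
    have h0 : s ≠ 0 := by rintro rfl; norm_num at hs
    exact mul_ne_zero (mul_ne_zero (mul_ne_zero h0 (sub_ne_zero.mpr h1))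
      (Gammaℝ_ne_zero_of_re_pos (by linarith))) (zeta_ne_zero hRH hs h1)

lemma zeta_conj {s : ℂ} (hs : 1 < s.re) :
    riemannZeta (starRingEnd ℂ s) = starRingEnd ℂ (riemannZeta s) := by
  rw [zeta_eq_tsum_one_div_nat_add_one_cpow hs,
    zeta_eq_tsum_one_div_nat_add_one_cpow (by simpa using hs), Complex.conj_tsum]
  refine tsum_congr fun n => ?_
  rw [map_div₀, map_one]
  congr 1
  have h : ((n : ℂ) + 1) = ((n + 1 : ℕ) : ℂ) := by push_cast; rfl
  rw [h, cpow_conj _ _ (by rw [natCast_arg]; exact Real.pi_pos.ne), conj_natCast]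

lemma Gammaℝ_conj (s : ℂ) : Gammaℝ (starRingEnd ℂ s) = starRingEnd ℂ (Gammaℝ s) := by
  have hp : (Real.pi : ℂ).arg ≠ Real.pi := by
    rw [arg_ofReal_of_nonneg Real.pi_pos.le]; exact Real.pi_pos.ne
  rw [Gammaℝ_def, Gammaℝ_def, map_mul, ← Gamma_conj]
  congr 1
  · have : -(starRingEnd ℂ) s / 2 = starRingEnd ℂ (-s / 2) := by simp [conj_ofNat]
    rw [this, cpow_conj _ _ hp, conj_ofReal]
  · simp [conj_ofNat]

/-- Schwarz reflection for `xi`: both sides are entire and agree on `Re s > 1`. -/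
lemma xi_conj (s : ℂ) : xi (starRingEnd ℂ s) = starRingEnd ℂ (xi s) := by
  have hd : Differentiable ℂ (fun s => starRingEnd ℂ (xi (starRingEnd ℂ s))) := by
    intro s
    have := (differentiable_xi (starRingEnd ℂ s)).hasDerivAt.conj_conj
    rw [Complex.conj_conj] at this
    exact this.differentiableAt
  have key : (fun s => starRingEnd ℂ (xi (starRingEnd ℂ s))) = xi := by
    refine AnalyticOnNhd.eq_of_eventuallyEq (z₀ := 2) (fun z _ => hd.analyticAt z)
      (fun z _ => differentiable_xi.analyticAt z) ?_
    have : ∀ᶠ z : ℂ in nhds 2, 1 < z.re :=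
      (isOpen_lt continuous_const continuous_re).mem_nhds (by simp)
    filter_upwards [this] with z hz
    have h1 : z ≠ 1 := by rintro rfl; simp at hz
    have h1' : starRingEnd ℂ z ≠ 1 := by
      intro h; apply h1; rw [← Complex.conj_conj z, h, map_one]
    rw [xi_eq (by linarith) h1, xi_eq (by simp; linarith) h1', zeta_conj hz, Gammaℝ_conj]
    simp
  have := congrFun key (starRingEnd ℂ s)
  simp only [Complex.conj_conj] at this
  exact this.symm

/-- Polynomial growth in a vertical strip. `Λ₀` is a Mellin transform that converges absolutely
at every exponent, so it is bounded on the strip by its integrands at two real exponents. -/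
lemma xi_strip_bound : ∃ C > (0 : ℝ), ∀ s : ℂ, -1 ≤ s.re → s.re ≤ 10 →
    ‖xi s‖ ≤ C * (1 + ‖s‖) ^ 2 := by
  open MeasureTheory Set in
  set P := HurwitzZeta.hurwitzEvenFEPair 0 with hP
  have hM : ∀ s : ℂ, MellinConvergent P.f_modif s := fun s =>
    (P.isStrongFEPair_toStrongFEPair.hasMellin s).1
  have h1 := (hM ((-1/2 : ℝ) : ℂ)).norm
  have h2 := (hM ((5 : ℝ) : ℂ)).norm
  set K := ∫ t in Ioi (0 : ℝ), (‖(t : ℂ) ^ (((-1/2 : ℝ) : ℂ) - 1) • P.f_modif t‖ +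
    ‖(t : ℂ) ^ (((5 : ℝ) : ℂ) - 1) • P.f_modif t‖) with hK
  have hK0 : 0 ≤ K := integral_nonneg fun t => by positivity
  have key : ∀ s : ℂ, -1 ≤ s.re → s.re ≤ 10 → ‖completedRiemannZeta₀ s‖ ≤ K := by
    intro s hs1 hs2
    have : completedRiemannZeta₀ s = mellin P.f_modif (s / 2) / 2 := rfl
    rw [this, norm_div]
    have hb : ‖mellin P.f_modif (s / 2)‖ ≤ K := by
      refine norm_integral_le_of_norm_le (h1.add h2) ?_
      filter_upwards [self_mem_ae_restrict measurableSet_Ioi] with t ht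
      have ht : 0 < t := ht
      rw [norm_smul, norm_smul, norm_smul, ← add_mul]
      gcongr
      rw [norm_cpow_eq_rpow_re_of_pos ht, norm_cpow_eq_rpow_re_of_pos ht,
        norm_cpow_eq_rpow_re_of_pos ht]
      have e : (s / 2 - 1).re = s.re / 2 - 1 := by simp
      rw [e]
      simp only [sub_re, ofReal_re, one_re]
      -- `s.re / 2 - 1` lies between the two exponents, so `t` to that power is at most the sum.
      rcases le_total 1 t with h | h
      · have := Real.rpow_le_rpow_of_exponent_le h (show s.re / 2 - 1 ≤ 5 - 1 by linarith)
        have := Real.rpow_nonneg ht.le (-1/2 - 1)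
        linarith
      · have := Real.rpow_le_rpow_of_exponent_ge ht h (show -1/2 - 1 ≤ s.re / 2 - 1 by linarith)
        have h' := Real.rpow_nonneg ht.le (5 - 1)
        exact le_add_of_le_of_nonneg this h'
    have : ‖(2 : ℂ)‖ = 2 := by simp
    rw [this]
    linarith [norm_nonneg (mellin P.f_modif (s / 2))]
  refine ⟨K + 1, by positivity, fun s hs1 hs2 => ?_⟩
  have hk := key s hs1 hs2
  have h3 : ‖s - 1‖ ≤ 1 + ‖s‖ := by
    calc _ ≤ ‖s‖ + ‖(1 : ℂ)‖ := norm_sub_le _ _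
      _ = _ := by simp [add_comm]
  calc ‖xi s‖ ≤ ‖s‖ * ‖s - 1‖ * ‖completedRiemannZeta₀ s‖ + 1 := by
        rw [xi]
        refine (norm_add_le _ _).trans ?_
        simp
    _ ≤ (1 + ‖s‖) * (1 + ‖s‖) * K + (1 + ‖s‖) * (1 + ‖s‖) := by
        have := norm_nonneg s
        gcongr
        · linarith
        · nlinarith
    _ = _ := by ring

/-! ### Bounds in the half-plane of absolute convergence and for `Γ` on `Re = 1/2` -/

lemma LSeries_bound {f : ℕ → ℂ} {x : ℝ} (hf : LSeriesSummable f x) :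
    ∃ C : ℝ, ∀ s : ℂ, x ≤ s.re → ‖LSeries f s‖ ≤ C := by
  refine ⟨∑' n, ‖LSeries.term f x n‖, fun s hs => ?_⟩
  have hle : ∀ n, ‖LSeries.term f s n‖ ≤ ‖LSeries.term f x n‖ := fun n =>
    LSeries.norm_term_le_of_re_le_re f (by simpa using hs) n
  exact tsum_of_norm_bounded hf.norm.hasSum hle

/-- The Dirichlet series of `ζ`, `1/ζ` and `ζ′/ζ` converge absolutely for `Re s > 1`, hence are
uniformly bounded on `Re s ≥ x > 1`. -/
lemma zeta_right_bounds {x : ℝ} (hx : 1 < x) : ∃ C ≥ (1 : ℝ), ∀ s : ℂ, x ≤ s.re →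
    ‖riemannZeta s‖ ≤ C ∧ ‖(riemannZeta s)⁻¹‖ ≤ C ∧
      ‖deriv riemannZeta s / riemannZeta s‖ ≤ C := by
  obtain ⟨C1, h1⟩ := LSeries_bound (f := 1) (x := x)
    (LSeriesSummable_one_iff.mpr (by simpa using hx))
  obtain ⟨C2, h2⟩ := LSeries_bound (f := fun n => ((ArithmeticFunction.moebius n : ℤ) : ℂ)) (x := x)
    (ArithmeticFunction.LSeriesSummable_moebius_iff.mpr (by simpa using hx))
  obtain ⟨C3, h3⟩ := LSeries_bound (f := fun n => ((ArithmeticFunction.vonMangoldt n : ℝ) : ℂ)) (x := x)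
    (ArithmeticFunction.LSeriesSummable_vonMangoldt (by simpa using hx))
  refine ⟨max 1 (max C1 (max C2 C3)), le_max_left _ _, fun s hs => ?_⟩
  have hs1 : 1 < s.re := by linarith
  have e2 : (riemannZeta s)⁻¹ =
      LSeries (fun n => ((ArithmeticFunction.moebius n : ℤ) : ℂ)) s := by
    have := ArithmeticFunction.LSeries_zeta_mul_Lseries_moebius hs1
    rw [ArithmeticFunction.LSeries_zeta_eq_riemannZeta hs1] at this
    exact inv_eq_of_mul_eq_one_right this
  have e3 := ArithmeticFunction.LSeries_vonMangoldt_eq_deriv_riemannZeta_div hs1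
  refine ⟨?_, ?_, ?_⟩
  · rw [← LSeries_one_eq_riemannZeta hs1]
    exact (h1 s hs).trans (by simp)
  · rw [e2]
    exact (h2 s hs).trans (by simp)
  · have : ‖deriv riemannZeta s / riemannZeta s‖ = ‖-deriv riemannZeta s / riemannZeta s‖ := by
      rw [neg_div, norm_neg]
    rw [this, ← e3]
    exact (h3 s hs).trans (by simp)

lemma norm_sin_le (w : ℂ) : ‖Complex.sin w‖ ≤ Real.exp |w.im| := by
  rw [Complex.sin, norm_div, norm_mul, norm_I, mul_one]
  have a1 : ‖cexp (-w * I)‖ ≤ Real.exp |w.im| := by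
    rw [norm_exp]; gcongr; simp; exact le_abs_self _
  have a2 : ‖cexp (w * I)‖ ≤ Real.exp |w.im| := by
    rw [norm_exp]; gcongr; simp; exact neg_le_abs _
  have := norm_sub_le (cexp (-w * I)) (cexp (w * I))
  simp only [norm_ofNat]
  linarith

/-- Exponential lower bound on the line `Re = 1/2`, from the reflection formula
`|Γ(1/2 + iy)|² = π / |sin π(1/2 + iy)|`. -/
lemma Gamma_half_lower (y : ℝ) :
    Real.exp (-(Real.pi * |y|)) ≤ ‖Gamma (1 / 2 + y * I)‖ := by
  have h := Gamma_mul_Gamma_one_sub (1 / 2 + y * I)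
  have hc : (1 - (1 / 2 + y * I) : ℂ) = starRingEnd ℂ (1 / 2 + y * I) := by
    simp [conj_ofNat]; ring
  rw [hc, Gamma_conj] at h
  have hn := congrArg norm h
  rw [norm_mul, RCLike.norm_conj, norm_div, norm_real, Real.norm_of_nonneg Real.pi_pos.le] at hn
  have hs := norm_sin_le (Real.pi * (1 / 2 + y * I))
  have him : ((Real.pi : ℂ) * (1 / 2 + y * I)).im = Real.pi * y := by
    simp
  rw [him, abs_mul, abs_of_pos Real.pi_pos] at hs
  set E := Real.exp (Real.pi * |y|) with hE
  have hE1 : 1 ≤ E := Real.one_le_exp (by positivity)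
  rw [Real.exp_neg, ← hE]
  set G := ‖Gamma (1 / 2 + y * I)‖
  have hG : 0 ≤ G := norm_nonneg _
  have hspos : 0 < ‖Complex.sin (Real.pi * (1 / 2 + y * I))‖ := by
    rcases (norm_nonneg (Complex.sin (Real.pi * (1 / 2 + y * I)))).eq_or_lt with h0 | h0
    · exfalso
      rw [← h0] at hn
      simp only [div_zero] at hn
      have hz : Gamma (1 / 2 + y * I) ≠ 0 := Gamma_ne_zero_of_re_pos (by simp)
      have : 0 < G := norm_pos_iff.mpr hz
      nlinarith
    · exact h0
  have hge : E⁻¹ ≤ G * G := by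
    rw [hn, inv_eq_one_div]
    have := Real.pi_gt_three
    gcongr
    linarith
  have : E⁻¹ ≤ 1 := inv_le_one_of_one_le₀ hE1
  have hp : 0 < E⁻¹ := by positivity
  by_contra! hcon
  nlinarith

/-! ### Horizontal shifts of the Gamma function -/

lemma log_norm_eq (w : ℂ) : Real.log ‖w‖ = 1 / 2 * Real.log (w.re ^ 2 + w.im ^ 2) := by
  have : w.re ^ 2 + w.im ^ 2 = ‖w‖ ^ 2 := by rw [Complex.sq_norm, normSq_apply]; ring
  rw [this, Real.log_pow]; push_cast; ring

/-- Lower bound for one factor of the Gauss product for `Γ(z) / Γ(z + h)`, in a form whose main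
part telescopes when `w` runs through `z, z + 1, z + 2, …`. -/
lemma log_step {w : ℂ} (hw : 1 / 4 ≤ w.re) {h : ℝ} (h0 : 0 ≤ h) (h1 : h ≤ 1) :
    h * (Real.log ‖w + 2‖ - Real.log ‖w + 1‖ - 3 / 2 / ((w.re + 1) ^ 2 + w.im ^ 2)) ≤
      Real.log ‖w + h‖ - Real.log ‖w‖ := by
  simp only [log_norm_eq, add_re, add_im, ofReal_re, ofReal_im, one_re, one_im, add_zero,
    show (2 : ℂ).re = 2 from rfl, show (2 : ℂ).im = 0 from rfl]
  set A := w.re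
  set y := w.im
  have hA : 0 < A := by linarith
  set D := (A + 1) ^ 2 + y ^ 2 with hD
  have hDpos : 0 < D := by positivity
  have hB : 0 < A ^ 2 + y ^ 2 := by positivity
  have hE : 0 < (A + h) ^ 2 + y ^ 2 := by positivity
  have hF : 0 < (A + 2) ^ 2 + y ^ 2 := by positivity
  have u1 : Real.log ((A + 2) ^ 2 + y ^ 2) - Real.log D ≤ (2 * A + 3) / D := by
    rw [← Real.log_div hF.ne' hDpos.ne']
    refine (Real.log_le_sub_one_of_pos (by positivity)).trans (le_of_eq ?_)
    field_simp; rw [hD]; ring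
  have u2 : (2 * A * h) / D ≤ Real.log ((A + h) ^ 2 + y ^ 2) - Real.log (A ^ 2 + y ^ 2) := by
    have := Real.log_le_sub_one_of_pos (div_pos hB hE)
    rw [Real.log_div hB.ne' hE.ne'] at this
    have e : (2 * A * h) / D ≤ (2 * A * h + h ^ 2) / ((A + h) ^ 2 + y ^ 2) := by
      gcongr
      · nlinarith
      · rw [hD]
        gcongr
    have e2 : (A ^ 2 + y ^ 2) / ((A + h) ^ 2 + y ^ 2) - 1 =
      - ((2 * A * h + h ^ 2) / ((A + h) ^ 2 + y ^ 2)) := by field_simp; ring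
    linarith
  have u3 : h * (Real.log ((A + 2) ^ 2 + y ^ 2) - Real.log D) ≤ h * ((2 * A + 3) / D) := by gcongr
  have u4 : h * ((2 * A + 3) / D) = 2 * A * h / D + 2 * (h * (3 / 2 / D)) := by ring
  nlinarith

lemma log_sum {z : ℂ} (hz : 1 / 4 ≤ z.re) {h : ℝ} (h0 : 0 ≤ h) (h1 : h ≤ 1) (m : ℕ) :
    h * (Real.log ‖z + m + 1‖ - Real.log ‖z + 1‖ - 3) ≤
      ∑ k ∈ Finset.range m, (Real.log ‖z + h + k‖ - Real.log ‖z + k‖) := by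
  set u : ℕ → ℝ := fun k => h * (Real.log ‖z + k + 1‖ + 3 / 2 / (k + 1 / 2)) with hu
  have hstep : ∀ k ∈ Finset.range m, u (k + 1) - u k ≤
      Real.log ‖z + h + k‖ - Real.log ‖z + k‖ := by
    intro k _
    have hk0 : (0 : ℝ) ≤ k := k.cast_nonneg
    have hre : 1 / 4 ≤ (z + k).re := by simp; linarith
    have := log_step hre h0 h1
    rw [show z + h + k = z + k + h by ring]
    refine le_trans ?_ this
    rw [hu]
    simp only
    rw [← mul_sub]
    refine mul_le_mul_of_nonneg_left ?_ h0
    rw [show z + ((k + 1 : ℕ) : ℂ) + 1 = z + k + 2 by push_cast; ring]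
    -- The error terms are compared with a telescoping series: `1 / (k + 5/4)²` is at most
    -- `1 / (k + 1/2) - 1 / (k + 3/2)`.
    have hd : 3 / 2 / (((z + k).re + 1) ^ 2 + (z + k).im ^ 2) ≤
        3 / 2 / ((k + 1 / 2) * ((k : ℝ) + 3 / 2)) := by
      gcongr
      have : (k : ℝ) + 5 / 4 ≤ (z + k).re + 1 := by simp; linarith
      nlinarith [sq_nonneg (z + k).im]
    have e : 3 / 2 / ((k + 1 / 2) * ((k : ℝ) + 3 / 2)) =
        3 / 2 / (k + 1 / 2) - 3 / 2 / (((k + 1 : ℕ) : ℝ) + 1 / 2) := by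
      push_cast
      field_simp
      ring
    linarith
  refine le_trans ?_ (Finset.sum_le_sum hstep)
  rw [Finset.sum_range_sub u m, hu]
  simp only
  rw [← mul_sub]
  refine mul_le_mul_of_nonneg_left ?_ h0
  have : (0 : ℝ) ≤ 3 / 2 / (m + 1 / 2) := by positivity
  simp
  norm_num
  linarith

/-- A uniform form of `|Γ(z + h)| ≲ |z|^h |Γ(z)|`, with an exponent linear in `h` so that it can
be differentiated at `h = 0`. -/
lemma Gamma_ratio {z : ℂ} (hz : 1 / 4 ≤ z.re) {h : ℝ} (h0 : 0 ≤ h) (h1 : h ≤ 1) :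
    ‖Gamma (z + h)‖ ≤ ‖Gamma z‖ * Real.exp (h * (Real.log ‖z + 1‖ + 3)) := by
  have t1 := (GammaSeq_tendsto_Gamma (z + h)).norm
  have t2 := ((GammaSeq_tendsto_Gamma z).norm).mul_const (Real.exp (h * (Real.log ‖z + 1‖ + 3)))
  refine le_of_tendsto_of_tendsto t1 t2 ?_
  filter_upwards [Filter.eventually_ge_atTop 1] with n hn
  have hnpos : (0 : ℝ) < n := by exact_mod_cast hn
  have p1 : ∀ k : ℕ, 0 < ‖z + k‖ := fun k => norm_pos_iff.mpr fun e => by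
    have := congrArg re e
    have hk0 : (0 : ℝ) ≤ k := k.cast_nonneg
    simp at this; linarith
  have p2 : ∀ k : ℕ, 0 < ‖z + h + k‖ := fun k => norm_pos_iff.mpr fun e => by
    have := congrArg re e
    have hk0 : (0 : ℝ) ≤ k := k.cast_nonneg
    simp at this; linarith
  have hs := log_sum hz h0 h1 (n + 1)
  rw [Finset.sum_sub_distrib, ← Real.log_prod (fun k _ => (p2 k).ne'),
    ← Real.log_prod (fun k _ => (p1 k).ne')] at hs
  set P2 := ∏ k ∈ Finset.range (n + 1), ‖z + h + k‖ with hP2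
  set P1 := ∏ k ∈ Finset.range (n + 1), ‖z + k‖ with hP1
  have q1 : 0 < P1 := Finset.prod_pos fun k _ => p1 k
  have q2 : 0 < P2 := Finset.prod_pos fun k _ => p2 k
  have hlog : Real.log n ≤ Real.log ‖z + (n + 1 : ℕ) + 1‖ := by
    refine Real.log_le_log hnpos ?_
    refine le_trans ?_ (re_le_norm _)
    simp; linarith
  have hm := mul_le_mul_of_nonneg_left hlog h0
  have g : ∀ s : ℂ, ‖GammaSeq s n‖ = (n : ℝ) ^ s.re * n.factorial / ∏ k ∈ Finset.range (n + 1), ‖s + k‖ := by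
    intro s
    rw [GammaSeq, norm_div, norm_mul, norm_prod, norm_natCast,
      norm_natCast_cpow_of_pos (by omega)]
  rw [g, g, ← hP2, ← hP1]
  have key : P1 * (n : ℝ) ^ h ≤ P2 * Real.exp (h * (Real.log ‖z + 1‖ + 3)) := by
    rw [← Real.exp_log q1, ← Real.exp_log q2, Real.rpow_def_of_pos hnpos, ← Real.exp_add,
      ← Real.exp_add]
    apply Real.exp_le_exp.mpr
    linarith
  have e : (z + h).re = z.re + h := by simp
  rw [e, Real.rpow_add hnpos, div_mul_eq_mul_div, div_le_div_iff₀ q2 q1]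
  have c : 0 ≤ (n : ℝ) ^ z.re * n.factorial := by positivity
  have := mul_le_mul_of_nonneg_left key c
  linarith

/-- The quotient `Γ(z) Γ(a) / Γ(z + a)` is the Beta integral `B(z, a)`, at most
`∫₀¹ (1 - x)^(a - 1) dx = 1 / a` when `Re z ≥ 1`. -/
lemma Gamma_shift_bound {z : ℂ} (hz : 1 ≤ z.re) {a : ℝ} (ha : 0 < a) :
    ‖Gamma z‖ * ‖Gamma a‖ ≤ ‖Gamma (z + a)‖ * (1 / a) := by
  have h := Gamma_mul_Gamma_eq_betaIntegral (s := z) (t := a) (by linarith) (by simpa using ha)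
  rw [← norm_mul, h, norm_mul]
  gcongr
  rw [betaIntegral]
  have hi : IntervalIntegrable (fun x : ℝ => (1 - x) ^ (a - 1)) MeasureTheory.volume 0 1 := by
    have := (intervalIntegral.intervalIntegrable_rpow' (a := 0) (b := 1) (r := a - 1)
      (by linarith)).comp_sub_left 1
    simpa using this.symm
  have hv : ∫ x : ℝ in (0 : ℝ)..1, (1 - x) ^ (a - 1) = 1 / a := by
    rw [intervalIntegral.integral_comp_sub_left (fun x => x ^ (a - 1)) 1, sub_self, sub_zero,
      integral_rpow (Or.inl (by linarith))]
    simp [ha.ne']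
  rw [← hv]
  refine intervalIntegral.norm_integral_le_of_norm_le zero_le_one ?_ hi
  refine Filter.Eventually.of_forall fun x hx => ?_
  have hx0 : 0 < x := hx.1
  -- At `x = 1` both powers of `1 - x` have base zero.
  rcases eq_or_lt_of_le hx.2 with rfl | hx1
  · rw [norm_mul]
    simp only [ofReal_one, sub_self, one_cpow, norm_one, one_mul]
    by_cases e : a = 1
    · simp [e]
    · have : (a : ℂ) - 1 ≠ 0 := by
        rw [sub_ne_zero]; exact_mod_cast e
      rw [zero_cpow this, norm_zero]
      exact Real.rpow_nonneg le_rfl _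
  · have h1x : 0 < 1 - x := by linarith
    rw [norm_mul, norm_cpow_eq_rpow_re_of_pos hx0]
    have : (1 - x : ℂ) = ((1 - x : ℝ) : ℂ) := by push_cast; rfl
    rw [this, norm_cpow_eq_rpow_re_of_pos h1x]
    have e : ((a : ℂ) - 1).re = a - 1 := by simp
    rw [e]
    refine mul_le_of_le_one_left (by positivity) ?_
    exact Real.rpow_le_one hx0.le hx1.le (by simp; linarith)

/-! ### A lower bound for the completed zeta function -/

/-- A nonvanishing holomorphic function on a disc, normalised to be `1` at the centre, has a
holomorphic logarithm there. -/
lemma exists_log_on_ball {f : ℂ → ℂ} {R : ℝ}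
    (hf : DifferentiableOn ℂ f (Metric.ball 0 R)) (h0 : ∀ z ∈ Metric.ball (0 : ℂ) R, f z ≠ 0)
    (h1 : f 0 = 1) (hR : 0 < R) :
    ∃ F : ℂ → ℂ, F 0 = 0 ∧ DifferentiableOn ℂ F (Metric.ball 0 R) ∧
      ∀ z ∈ Metric.ball (0 : ℂ) R, f z = cexp (F z) := by
  have hd : DifferentiableOn ℂ (fun z => deriv f z / f z) (Metric.ball 0 R) :=
    (hf.deriv Metric.isOpen_ball).div hf h0
  obtain ⟨F, hF0, hF⟩ := hd.isExactOn_ball.with_val_at 0 0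
  refine ⟨F, hF0, fun z hz => (hF z hz).differentiableAt.differentiableWithinAt, fun z hz => ?_⟩
  have hder : ∀ w ∈ Metric.ball (0 : ℂ) R, HasDerivAt (fun w => f w * cexp (-F w)) 0 w := by
    intro w hw
    have hfw := (hf.differentiableAt (Metric.isOpen_ball.mem_nhds hw)).hasDerivAt
    refine (hfw.mul (hF w hw).neg.cexp).congr_deriv ?_
    have := h0 w hw
    field_simp
    ring
  have hconst : f z * cexp (-F z) = f 0 * cexp (-F 0) := by
    refine (convex_ball (0 : ℂ) R).is_const_of_fderivWithin_eq_zero (𝕜 := ℂ)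
      (f := fun w => f w * cexp (-F w))
      (fun w hw => (hder w hw).differentiableAt.differentiableWithinAt) ?_ hz
      (Metric.mem_ball_self hR)
    intro w hw
    rw [fderivWithin_of_isOpen Metric.isOpen_ball hw]
    ext
    simpa using (hder w hw).deriv
  rw [hF0, h1, neg_zero, exp_zero, exp_neg] at hconst
  have := exp_ne_zero (F z)
  field_simp at hconst
  simpa using hconst

/-- Borel–Carathéodory applied to `log (f / f c)`: a zero-free function that is not much larger
than its value at the centre of a disc is not much smaller than it on a smaller disc. -/
lemma lower_bound_of_upper {f : ℂ → ℂ} {c : ℂ} {R r M : ℝ} (hM : 0 < M) (hr : 0 < r) (hrR : r < R)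
    (hf : DifferentiableOn ℂ f (Metric.ball c R)) (h0 : ∀ z ∈ Metric.ball c R, f z ≠ 0)
    (hb : ∀ z ∈ Metric.ball c R, ‖f z‖ ≤ Real.exp M * ‖f c‖) {z : ℂ} (hz : ‖z - c‖ ≤ r) :
    ‖f c‖ * Real.exp (-(2 * M * r / (R - r))) ≤ ‖f z‖ := by
  have hR : 0 < R := by linarith
  have hfc : f c ≠ 0 := h0 c (Metric.mem_ball_self hR)
  have hfcp : 0 < ‖f c‖ := norm_pos_iff.mpr hfc
  have hmem : ∀ w ∈ Metric.ball (0 : ℂ) R, c + w ∈ Metric.ball c R := by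
    intro w hw; simpa using hw
  obtain ⟨F, hF0, hFd, hF⟩ := exists_log_on_ball (f := fun w => f (c + w) / f c) (R := R)
    (by
      refine DifferentiableOn.div_const ?_ _
      exact hf.comp (by fun_prop) hmem)
    (fun w hw => div_ne_zero (h0 _ (hmem w hw)) hfc) (by simp [hfc]) hR
  have hre : Set.MapsTo F (Metric.ball 0 R) {z | z.re ≤ M} := by
    intro w hw
    have h1 := hb _ (hmem w hw)
    have h2 := congrArg norm (hF w hw)
    rw [norm_exp, norm_div] at h2
    have : Real.exp (F w).re ≤ Real.exp M := by
      rw [← h2, div_le_iff₀ hfcp]; exact h1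
    exact Real.exp_le_exp.mp this
  have hzR : z - c ∈ Metric.ball (0 : ℂ) R := by
    rw [mem_ball_zero_iff]; linarith
  have hB := borelCaratheodory_zero hM hFd hre hR hzR hF0
  have hB' : 2 * M * ‖z - c‖ / (R - ‖z - c‖) ≤ 2 * M * r / (R - r) := by
    have : 0 < R - r := by linarith
    gcongr
  have h2 := congrArg norm (hF (z - c) hzR)
  simp only [add_sub_cancel] at h2
  rw [norm_div, norm_exp, div_eq_iff hfcp.ne'] at h2
  rw [h2, mul_comm]
  gcongr
  have := abs_re_le_norm (F (z - c))
  have := neg_abs_le (F (z - c)).re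
  linarith

lemma norm_Gammaℝ {s : ℂ} : ‖Gammaℝ s‖ = Real.pi ^ (-s.re / 2) * ‖Gamma (s / 2)‖ := by
  rw [Gammaℝ_def, norm_mul, norm_cpow_eq_rpow_re_of_pos Real.pi_pos]
  simp

lemma xi_center_lower : ∃ k > (0 : ℝ), ∀ v : ℝ,
    k * Real.exp (-(2 * |v|)) ≤ ‖xi (3 + v * I)‖ := by
  obtain ⟨C, hC1, hC⟩ := zeta_right_bounds (x := 2) (by norm_num)
  refine ⟨6 * (Real.pi ^ (-(3 : ℝ) / 2) * (1 / 2)) * C⁻¹, by positivity, fun v => ?_⟩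
  set s : ℂ := 3 + v * I with hs
  have hre : s.re = 3 := by simp [hs]
  have hs1 : s ≠ 1 := by intro h; rw [h] at hre; norm_num at hre
  rw [xi_eq (by rw [hre]; norm_num) hs1, norm_mul, norm_mul, norm_mul, norm_Gammaℝ, hre]
  have a1 : 3 ≤ ‖s‖ := by rw [← hre]; exact re_le_norm s
  have a2 : 2 ≤ ‖s - 1‖ := by
    have := re_le_norm (s - 1)
    simp [hre] at this; linarith
  have a3 : C⁻¹ ≤ ‖riemannZeta s‖ := by
    have := (hC s (by rw [hre]; norm_num)).2.1
    rw [norm_inv] at this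
    have hz : 0 < ‖riemannZeta s‖ :=
      norm_pos_iff.mpr (riemannZeta_ne_zero_of_one_le_re (by rw [hre]; norm_num))
    exact inv_le_of_inv_le₀ hz this
  have a4 : 1 / 2 * Real.exp (-(2 * |v|)) ≤ ‖Gamma (s / 2)‖ := by
    -- At `Re s = 3` one application of `Γ(w + 1) = w Γ(w)` reaches the line `Re w = 1/2`.
    have e : s / 2 = (1 / 2 + (v / 2 : ℝ) * I) + 1 := by rw [hs]; push_cast; ring
    rw [e, Gamma_add_one _ (by
      intro h; have := congrArg re h; simp at this), norm_mul]
    have b1 : 1 / 2 ≤ ‖(1 / 2 + (v / 2 : ℝ) * I : ℂ)‖ := by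
      have := re_le_norm (1 / 2 + (v / 2 : ℝ) * I : ℂ)
      simp at this ⊢; linarith
    have b2 := Gamma_half_lower (v / 2)
    have b3 : Real.exp (-(2 * |v|)) ≤ Real.exp (-(Real.pi * |v / 2|)) := by
      apply Real.exp_le_exp.mpr
      rw [abs_div, abs_of_pos (by norm_num : (0 : ℝ) < 2)]
      nlinarith [Real.pi_lt_four, abs_nonneg v]
    exact mul_le_mul b1 (b3.trans b2) (Real.exp_pos _).le (norm_nonneg _)
  have hp : 0 < Real.pi ^ (-(3 : ℝ) / 2) := Real.rpow_pos_of_pos Real.pi_pos _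
  calc _ = 3 * 2 * (Real.pi ^ (-(3 : ℝ) / 2) * (1 / 2 * Real.exp (-(2 * |v|)))) * C⁻¹ := by ring
    _ ≤ _ := by gcongr

/-- Under RH, `xi` decays at most exponentially in the strip `1/2 + a ≤ Re s ≤ 3`. This supplies
the growth condition for the Phragmén–Lindelöf principle in `xi_mono_aux`. -/
lemma xi_lower (hRH : RiemannHypothesis) {a : ℝ} (ha : 0 < a) (ha1 : a ≤ 1) :
    ∃ B > (0 : ℝ), ∀ s : ℂ, 1 / 2 + a ≤ s.re → s.re ≤ 3 →
      Real.exp (-(B * (1 + |s.im|))) ≤ ‖xi s‖ := by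
  obtain ⟨C, hC0, hC⟩ := xi_strip_bound
  obtain ⟨k, hk0, hk⟩ := xi_center_lower
  set B0 : ℝ := 16 + |Real.log C| + |Real.log k| with hB0
  have hB0p : 0 < B0 := by positivity
  refine ⟨B0 + 2 * B0 * (5 / 2 - a) / (a / 2), by
    have : 0 < 5 / 2 - a := by linarith
    positivity, fun s hs1 hs2 => ?_⟩
  set v := s.im with hv
  set c : ℂ := 3 + v * I with hc
  have hv0 := abs_nonneg v
  have hM : 0 < B0 * (1 + |v|) := by positivity
  have hcn : Real.exp (-(B0 * (1 + |v|))) ≤ ‖xi c‖ := by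
    refine le_trans ?_ (hk v)
    conv_rhs => rw [← Real.exp_log hk0]
    rw [← Real.exp_add]
    apply Real.exp_le_exp.mpr
    rw [hB0]
    nlinarith [neg_abs_le (Real.log k), abs_nonneg (Real.log C), abs_nonneg (Real.log k)]
  have hcre : c.re = 3 := by simp [hc]
  have hcnorm : ‖c‖ ≤ 3 + |v| := by
    refine (norm_add_le _ _).trans ?_
    simp
  have hball : ∀ z ∈ Metric.ball c (5 / 2 - a / 2), 1 / 2 < z.re ∧ z.re ≤ 10 ∧ ‖z‖ ≤ 6 + |v| := by
    intro z hz
    rw [mem_ball_iff_norm] at hz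
    have h1 := abs_re_le_norm (z - c)
    rw [sub_re, hcre] at h1
    have h2 := abs_le.mp (h1.trans hz.le)
    have h1' := abs_lt.mp (h1.trans_lt hz)
    have h3 : ‖z‖ ≤ ‖z - c‖ + ‖c‖ := by simpa using norm_add_le (z - c) c
    refine ⟨by linarith, by linarith, by linarith⟩
  -- The disc about `3 + iv` of radius `5/2 - a/2` stays to the right of the critical line, and
  -- the concentric one of radius `5/2 - a` contains `s`.
  have hmain := lower_bound_of_upper (f := xi) (c := c) (R := 5 / 2 - a / 2) (r := 5 / 2 - a)
    (M := B0 * (1 + |v|)) (z := s) hM (by linarith) (by linarith)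
    differentiable_xi.differentiableOn (fun z hz => xi_ne_zero hRH (hball z hz).1)
    (by
      intro z hz
      obtain ⟨b1, b2, b3⟩ := hball z hz
      refine (hC z (by linarith) b2).trans ?_
      have h4 : C * (1 + ‖z‖) ^ 2 ≤ C * Real.exp (2 * (6 + |v|)) := by
        gcongr
        rw [show 2 * (6 + |v|) = (6 + |v|) + (6 + |v|) by ring, Real.exp_add, sq]
        have := Real.add_one_le_exp (6 + |v|)
        have : 1 + ‖z‖ ≤ Real.exp (6 + |v|) := by linarith
        gcongr
      refine h4.trans ?_
      have h5 := mul_le_mul_of_nonneg_left (hk v) (Real.exp_pos (B0 * (1 + |v|))).le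
      refine le_trans ?_ h5
      conv_lhs => rw [← Real.exp_log hC0]
      conv_rhs => rw [← Real.exp_log hk0]
      rw [← Real.exp_add, ← Real.exp_add, ← Real.exp_add]
      apply Real.exp_le_exp.mpr
      rw [hB0]
      nlinarith [neg_abs_le (Real.log k), le_abs_self (Real.log C), abs_nonneg (Real.log C),
        abs_nonneg (Real.log k)])
    (by
      have e : s - c = ((s.re - 3 : ℝ) : ℂ) := by
        apply Complex.ext <;> simp [hc, hv]
      rw [e, norm_real, Real.norm_eq_abs, abs_le]
      constructor <;> linarith)
  refine le_trans ?_ hmain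
  have := mul_le_mul_of_nonneg_right hcn
    (Real.exp_pos (-(2 * (B0 * (1 + |v|)) * (5 / 2 - a) / (5 / 2 - a / 2 - (5 / 2 - a))))).le
  refine le_trans (le_of_eq ?_) this
  rw [← Real.exp_add]
  congr 1
  rw [show 5 / 2 - a / 2 - (5 / 2 - a) = a / 2 by ring]
  ring

/-! ### Horizontal monotonicity -/

lemma xi_ratio_right {a : ℝ} (ha : 0 < a) (ha1 : a ≤ 1 / 4) :
    ∃ K > (0 : ℝ), ∀ s : ℂ, 3 ≤ s.re → ‖xi (s - 2 * a)‖ ≤ K * ‖xi s‖ := by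
  obtain ⟨C, hC1, hC⟩ := zeta_right_bounds (x := 2) (by norm_num)
  have hGa : 0 < ‖Gamma (a : ℂ)‖ := norm_pos_iff.mpr (Gamma_ne_zero_of_re_pos (by simpa using ha))
  refine ⟨Real.pi ^ a * (1 / a) / ‖Gamma (a : ℂ)‖ * (C * C), by positivity, fun s hs => ?_⟩
  have hre : (s - 2 * a).re = s.re - 2 * a := by simp
  have him : (s - 2 * a).im = s.im := by simp
  have hne : ∀ w : ℂ, 2 ≤ w.re → w ≠ 1 := by
    intro w hw h; rw [h] at hw; norm_num at hw
  rw [xi_eq (by linarith) (hne s (by linarith)), xi_eq (by linarith) (hne _ (by linarith)),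
    norm_mul, norm_mul, norm_mul, norm_mul, norm_mul, norm_mul, norm_Gammaℝ, norm_Gammaℝ, hre]
  have a1 : ‖s - 2 * a‖ ≤ ‖s‖ := by
    rw [← sq_le_sq₀ (norm_nonneg _) (norm_nonneg _), Complex.sq_norm, Complex.sq_norm,
      normSq_apply, normSq_apply, hre, him]
    nlinarith
  have a2 : ‖s - 2 * a - 1‖ ≤ ‖s - 1‖ := by
    rw [← sq_le_sq₀ (norm_nonneg _) (norm_nonneg _), Complex.sq_norm, Complex.sq_norm,
      normSq_apply, normSq_apply, sub_re (s - 2 * a), sub_im (s - 2 * a), sub_re s 1, sub_im s 1,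
      hre, him]
    simp only [one_re, one_im]
    nlinarith
  have a3 : ‖Gamma ((s - 2 * a) / 2)‖ ≤ 1 / a / ‖Gamma (a : ℂ)‖ * ‖Gamma (s / 2)‖ := by
    have h := Gamma_shift_bound (z := (s - 2 * a) / 2) (a := a) (by simp; linarith) ha
    rw [show (s - 2 * a) / 2 + a = s / 2 by ring] at h
    rw [div_mul_eq_mul_div, le_div_iff₀ hGa]
    linarith
  have a4 : ‖riemannZeta (s - 2 * a)‖ ≤ C * C * ‖riemannZeta s‖ := by
    have h1 := (hC (s - 2 * a) (by linarith)).1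
    have h2 := (hC s (by linarith)).2.1
    have hz : 0 < ‖riemannZeta s‖ :=
      norm_pos_iff.mpr (riemannZeta_ne_zero_of_one_le_re (by linarith))
    rw [norm_inv, inv_le_iff_one_le_mul₀ hz] at h2
    nlinarith
  have a5 : Real.pi ^ (-(s.re - 2 * a) / 2) = Real.pi ^ a * Real.pi ^ (-s.re / 2) := by
    rw [← Real.rpow_add Real.pi_pos]; congr 1; ring
  rw [a5]
  calc _ ≤ ‖s‖ * ‖s - 1‖ * (Real.pi ^ a * Real.pi ^ (-s.re / 2) *
        (1 / a / ‖Gamma (a : ℂ)‖ * ‖Gamma (s / 2)‖)) * (C * C * ‖riemannZeta s‖) := by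
        gcongr
    _ = _ := by ring

/-- By the functional equation and reflection, `xi (s - 2 a) / xi s` has modulus `1` on
`Re s = 1/2 + a`; by RH it is holomorphic to the right of that line. Phragmén–Lindelöf in this
half-plane bounds it by `1`. -/
lemma xi_mono_aux (hRH : RiemannHypothesis) {a : ℝ} (ha : 0 < a) (ha1 : a ≤ 1 / 4) {s : ℂ}
    (hs : 1 / 2 + a ≤ s.re) : ‖xi (s - 2 * a)‖ ≤ ‖xi s‖ := by
  obtain ⟨K, hK0, hK⟩ := xi_ratio_right ha ha1
  obtain ⟨C, hC0, hC⟩ := xi_strip_bound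
  obtain ⟨B, hB0, hB⟩ := xi_lower hRH ha (by linarith)
  set f : ℂ → ℂ := fun z => xi (z + 1 / 2 - a) / xi (z + 1 / 2 + a) with hf
  have hne : ∀ z : ℂ, 0 ≤ z.re → xi (z + 1 / 2 + a) ≠ 0 := by
    intro z hz
    exact xi_ne_zero hRH (by simp; linarith)
  have hd : DiffContOnCl ℂ f {z | 0 < z.re} := by
    apply DifferentiableOn.diffContOnCl
    intro z hz
    have hz' : 0 ≤ z.re := by
      have : closure {z : ℂ | 0 < z.re} ⊆ {z | 0 ≤ z.re} :=
        closure_minimal (fun w (hw : 0 < w.re) => hw.le) (isClosed_le continuous_const continuous_re)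
      exact this hz
    have d1 : DifferentiableAt ℂ (fun z : ℂ => xi (z + 1 / 2 - a)) z :=
      (differentiable_xi _).comp z (by fun_prop)
    have d2 : DifferentiableAt ℂ (fun z : ℂ => xi (z + 1 / 2 + a)) z :=
      (differentiable_xi _).comp z (by fun_prop)
    exact (d1.div d2 (hne z hz')).differentiableWithinAt
  have hfK : ∀ z : ℂ, 3 ≤ z.re → ‖f z‖ ≤ K := by
    intro z hz
    rw [hf]
    simp only
    rw [norm_div, div_le_iff₀ (norm_pos_iff.mpr (hne z (by linarith)))]
    have := hK (z + 1 / 2 + a) (by simp; linarith)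
    rwa [show z + 1 / 2 + a - 2 * a = z + 1 / 2 - a by ring] at this
  have hgrow : ∀ z : ℂ, 0 < z.re → ‖f z‖ ≤ (K + C * Real.exp (4 + B)) * Real.exp ((B + 2) * ‖z‖) := by
    intro z hz
    have hn0 := norm_nonneg z
    have he : 1 ≤ Real.exp ((B + 2) * ‖z‖) := Real.one_le_exp (by positivity)
    have hce : 0 ≤ C * Real.exp (4 + B) := by positivity
    rcases le_total 3 (z + 1 / 2 + a).re with h3 | h3
    · have := hK (z + 1 / 2 + a) h3
      rw [show z + 1 / 2 + a - 2 * a = z + 1 / 2 - a by ring] at this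
      have h4 : ‖f z‖ ≤ K := by
        rw [hf]
        simp only
        rwa [norm_div, div_le_iff₀ (norm_pos_iff.mpr (hne z (by linarith)))]
      nlinarith
    · have h1 := hB (z + 1 / 2 + a) (by simp; linarith) h3
      have hre1 : (z + 1 / 2 + a).re = z.re + 1 / 2 + a := by simp
      have hre2 : (z + 1 / 2 - a).re = z.re + 1 / 2 - a := by simp
      have him1 : (z + 1 / 2 + a).im = z.im := by simp
      rw [him1] at h1
      have h2 := hC (z + 1 / 2 - a) (by linarith) (by linarith)
      have h5 : ‖z + 1 / 2 - a‖ ≤ ‖z‖ + 1 := by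
        have : z + 1 / 2 - a = z + ((1 / 2 - a : ℝ) : ℂ) := by push_cast; ring
        rw [this]
        refine (norm_add_le _ _).trans ?_
        rw [norm_real, Real.norm_eq_abs, abs_of_pos (by linarith)]
        linarith
      have h6 : (1 + ‖z + 1 / 2 - a‖) ^ 2 ≤ Real.exp (2 * (‖z‖ + 2)) := by
        rw [show 2 * (‖z‖ + 2) = (‖z‖ + 2) + (‖z‖ + 2) by ring, Real.exp_add, sq]
        have := Real.add_one_le_exp (‖z‖ + 2)
        have : 1 + ‖z + 1 / 2 - a‖ ≤ Real.exp (‖z‖ + 2) := by linarith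
        gcongr
      have h7 : ‖f z‖ ≤ C * Real.exp (2 * (‖z‖ + 2)) / Real.exp (-(B * (1 + |z.im|))) := by
        rw [hf]
        simp only
        rw [norm_div]
        have := h2.trans (mul_le_mul_of_nonneg_left h6 hC0.le)
        gcongr
      refine h7.trans ?_
      rw [Real.exp_neg, div_inv_eq_mul, mul_assoc, ← Real.exp_add]
      have h8 : Real.exp (2 * (‖z‖ + 2) + B * (1 + |z.im|)) ≤
          Real.exp (4 + B) * Real.exp ((B + 2) * ‖z‖) := by
        rw [← Real.exp_add]
        apply Real.exp_le_exp.mpr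
        have := mul_le_mul_of_nonneg_left (abs_im_le_norm z) hB0.le
        linarith
      have h9 := mul_le_mul_of_nonneg_left h8 hC0.le
      nlinarith
  have hexp : ∃ c < (2 : ℝ), ∃ B', f =O[Bornology.cobounded ℂ ⊓ Filter.principal {z | 0 < z.re}]
      fun z => Real.exp (B' * ‖z‖ ^ c) := by
    refine ⟨1, by norm_num, B + 2, ?_⟩
    refine Asymptotics.IsBigO.of_bound (K + C * Real.exp (4 + B)) ?_
    refine Filter.Eventually.filter_mono inf_le_right ?_
    rw [Filter.eventually_principal]
    intro z hz
    rw [Real.rpow_one, Real.norm_of_nonneg (Real.exp_pos _).le]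
    exact hgrow z hz
  have hreal : Filter.IsBoundedUnder (· ≤ ·) Filter.atTop fun x : ℝ => ‖f x‖ := by
    refine ⟨K, ?_⟩
    rw [Filter.eventually_map]
    filter_upwards [Filter.eventually_ge_atTop 3] with x hx
    exact hfK x (by simpa using hx)
  have him : ∀ x : ℝ, ‖f (x * I)‖ ≤ 1 := by
    intro x
    rw [hf]
    simp only
    -- On the boundary line, numerator and denominator are swapped by `s ↦ 1 - conj s`.
    have e : (x * I + 1 / 2 - a : ℂ) = 1 - starRingEnd ℂ (x * I + 1 / 2 + a) := by
      simp [conj_ofNat]; ring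
    rw [e, xi_one_sub, xi_conj, norm_div, RCLike.norm_conj]
    exact div_self_le_one _
  have hmain := PhragmenLindelof.right_half_plane_of_bounded_on_real (z := s - 1 / 2 - a)
    hd hexp hreal him (by simp; linarith)
  rw [hf] at hmain
  simp only at hmain
  rw [norm_div, div_le_one (norm_pos_iff.mpr (hne _ (by simp; linarith)))] at hmain
  rw [show s - 1 / 2 - a + 1 / 2 - a = s - 2 * a by ring,
    show s - 1 / 2 - a + 1 / 2 + a = s by ring] at hmain
  exact hmain

/-- Under RH, `|xi|` is nondecreasing along horizontal segments to the right of the critical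
line. -/
lemma xi_mono (hRH : RiemannHypothesis) {s : ℂ} (hs : 1 / 2 ≤ s.re) {h : ℝ} (h0 : 0 < h)
    (h1 : h ≤ 1 / 2) : ‖xi s‖ ≤ ‖xi (s + h)‖ := by
  have := xi_mono_aux hRH (a := h / 2) (s := s + h) (by linarith) (by linarith)
    (by simp; linarith)
  rwa [show s + h - 2 * ((h / 2 : ℝ) : ℂ) = s by push_cast; ring] at this

/-! ### A one-sided bound for the logarithmic derivative -/

/-- The horizontal derivative of `log |f|` is `Re (f′ / f)`. -/
lemma hasDerivAt_log_norm {f : ℂ → ℂ} {σ t : ℝ} (hf : DifferentiableAt ℂ f (σ + t * I))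
    (h0 : f (σ + t * I) ≠ 0) :
    HasDerivAt (fun x : ℝ => Real.log ‖f (x + t * I)‖)
      (deriv f (σ + t * I) / f (σ + t * I)).re σ := by
  have h1 : HasDerivAt (fun x : ℝ => f (x + t * I)) (deriv f (σ + t * I)) σ := by
    have h2 : HasDerivAt (fun z : ℂ => f (z + t * I)) (deriv f (σ + t * I)) (σ : ℂ) :=
      hf.hasDerivAt.comp_add_const (σ : ℂ) (t * I)
    exact h2.comp_ofReal
  have h3 := (h1.norm_sq.log (by simpa using h0)).const_mul (1 / 2 : ℝ)
  have e : (fun x : ℝ => Real.log ‖f (x + t * I)‖) =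
      fun x : ℝ => 1 / 2 * Real.log (‖f (x + t * I)‖ ^ 2) := by
    funext x
    rw [Real.log_pow]; push_cast; ring
  rw [e]
  refine h3.congr_deriv ?_
  rw [Complex.inner, div_re, mul_re, conj_re, conj_im, Complex.sq_norm]
  ring

lemma norm_shift_le {w : ℂ} {h : ℝ} (hw : 1 ≤ ‖w‖) (h0 : 0 ≤ h) :
    ‖w + h‖ ≤ ‖w‖ * Real.exp h := by
  have h1 : ‖w + h‖ ≤ ‖w‖ + h := by
    refine (norm_add_le _ _).trans ?_
    rw [norm_real, Real.norm_of_nonneg h0]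
  have := Real.add_one_le_exp h
  nlinarith

/-- The monotonicity of `|xi|` rewritten for `ζ`: the factors `s`, `s - 1` and the Gamma factor
grow by at most `exp (h (½ log |s| + O(1)))` under a shift by `h`. -/
lemma zeta_shift (hRH : RiemannHypothesis) {s : ℂ} (hs : 1 / 2 ≤ s.re) (hi : 1 ≤ |s.im|)
    {h : ℝ} (h0 : 0 < h) (h1 : h ≤ 1 / 2) :
    ‖riemannZeta s‖ ≤ ‖riemannZeta (s + h)‖ *
      Real.exp (h * (1 / 2 * Real.log ‖s / 2 + 1‖ + 4)) := by
  have him : (s + h).im = s.im := by simp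
  have hne : ∀ w : ℂ, 1 ≤ |w.im| → w ≠ 1 := by
    rintro w hw rfl; norm_num at hw
  have hx := xi_mono hRH hs h0 h1
  rw [xi_eq (by linarith) (hne s hi), xi_eq (by simp; linarith) (hne _ (by rwa [him])),
    norm_mul, norm_mul, norm_mul, norm_mul, norm_mul, norm_mul] at hx
  have n1 : 1 ≤ ‖s‖ := hi.trans (abs_im_le_norm s)
  have n2 : 1 ≤ ‖s - 1‖ := by
    have := abs_im_le_norm (s - 1)
    simp at this; linarith
  have m1 := norm_shift_le n1 h0.le
  have m2 : ‖s + h - 1‖ ≤ ‖s - 1‖ * Real.exp h := by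
    rw [show s + h - 1 = s - 1 + h by ring]; exact norm_shift_le n2 h0.le
  have m3 : ‖Gammaℝ (s + h)‖ ≤ ‖Gammaℝ s‖ *
      Real.exp (h / 2 * (Real.log ‖s / 2 + 1‖ + 3)) := by
    rw [norm_Gammaℝ, norm_Gammaℝ]
    have g := Gamma_ratio (z := s / 2) (h := h / 2) (by simp; linarith) (by linarith) (by linarith)
    rw [show s / 2 + ((h / 2 : ℝ) : ℂ) = (s + h) / 2 by push_cast; ring] at g
    have p : Real.pi ^ (-(s + h).re / 2) ≤ Real.pi ^ (-s.re / 2) := by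
      apply Real.rpow_le_rpow_of_exponent_le (by linarith [Real.pi_gt_three])
      simp; linarith
    rw [mul_assoc]
    gcongr
  have hG : 0 < ‖Gammaℝ s‖ := norm_pos_iff.mpr (Gammaℝ_ne_zero_of_re_pos (by linarith))
  set A := ‖s‖ * ‖s - 1‖ * ‖Gammaℝ s‖ with hA
  have hA0 : 0 < A := by positivity
  have hfin : A * ‖riemannZeta s‖ ≤ A * (‖riemannZeta (s + h)‖ *
      Real.exp (h * (1 / 2 * Real.log ‖s / 2 + 1‖ + 4))) := by
    refine hx.trans ?_
    calc _ ≤ (‖s‖ * Real.exp h) * (‖s - 1‖ * Real.exp h) * (‖Gammaℝ s‖ *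
          Real.exp (h / 2 * (Real.log ‖s / 2 + 1‖ + 3))) * ‖riemannZeta (s + h)‖ := by gcongr
      _ = A * (‖riemannZeta (s + h)‖ * (Real.exp h * Real.exp h *
          Real.exp (h / 2 * (Real.log ‖s / 2 + 1‖ + 3)))) := by rw [hA]; ring
      _ ≤ _ := by
        rw [← Real.exp_add, ← Real.exp_add]
        gcongr
        linarith
  exact le_of_mul_le_mul_left hfin hA0

/-- The one-sided bound `Re ζ′/ζ ≥ -(½ log |t| + O(1))`, obtained by letting `h → 0` in
`zeta_shift`. -/
lemma logDeriv_zeta_lower (hRH : RiemannHypothesis) {s : ℂ} (hs : 1 / 2 < s.re)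
    (hi : 1 ≤ |s.im|) :
    -(1 / 2 * Real.log ‖s / 2 + 1‖ + 4) ≤ (deriv riemannZeta s / riemannZeta s).re := by
  set K := 1 / 2 * Real.log ‖s / 2 + 1‖ + 4 with hK
  have hne : ∀ w : ℂ, 1 ≤ |w.im| → w ≠ 1 := by
    rintro w hw rfl; norm_num at hw
  have es : ((s.re : ℝ) : ℂ) + (s.im : ℝ) * I = s := re_add_im s
  have hder := hasDerivAt_log_norm (f := riemannZeta) (σ := s.re) (t := s.im)
    (by rw [es]; exact differentiableAt_riemannZeta (hne s hi))
    (by rw [es]; exact zeta_ne_zero hRH hs (hne s hi))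
  rw [es] at hder
  have hslope := (hasDerivAt_iff_tendsto_slope.mp hder).mono_left
    (nhdsWithin_mono s.re (s := Set.Ioi s.re) (fun x hx => ne_of_gt hx))
  refine ge_of_tendsto hslope ?_
  have hev : ∀ᶠ x in nhdsWithin s.re (Set.Ioi s.re), x ∈ Set.Ioo s.re (s.re + 1 / 2) :=
    Ioo_mem_nhdsGT (by linarith)
  filter_upwards [hev] with x hx
  have hx0 : 0 < x - s.re := by linarith [hx.1]
  rw [slope_def_field, le_div_iff₀ hx0, es]
  have hz := zeta_shift hRH hs.le hi hx0 (by linarith [hx.2])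
  rw [← hK] at hz
  have e2 : s + ((x - s.re : ℝ) : ℂ) = x + (s.im : ℝ) * I := by
    apply Complex.ext <;> simp
  rw [e2] at hz
  have z1 : riemannZeta s ≠ 0 := zeta_ne_zero hRH hs (hne s hi)
  have z2 : riemannZeta (x + (s.im : ℝ) * I) ≠ 0 :=
    zeta_ne_zero hRH (by simp; linarith [hx.1]) (hne _ (by simpa using hi))
  have := Real.log_le_log (norm_pos_iff.mpr z1) hz
  rw [Real.log_mul (norm_ne_zero_iff.mpr z2) (Real.exp_pos _).ne', Real.log_exp] at this
  linarith

/-! ### A two-constants estimate and its integration -/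

/-- The map `g ↦ g / (g + 2 N)` sends the half-plane `Re g ≥ -N` into the closed unit disc. -/
lemma norm_le_norm_add {g : ℂ} {N : ℝ} (hN : 0 < N) (h : -N ≤ g.re) :
    ‖g‖ ≤ ‖g + 2 * N‖ := by
  rw [← sq_le_sq₀ (norm_nonneg _) (norm_nonneg _), Complex.sq_norm, Complex.sq_norm,
    normSq_apply, normSq_apply]
  simp
  nlinarith

lemma re_add_pos {g : ℂ} {N : ℝ} (h : -N ≤ g.re) : N ≤ ‖g + 2 * N‖ := by
  refine le_trans ?_ (re_le_norm _)
  simp; linarith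

/-- If the image of `g` under `g ↦ g / (g + 2 N)` lies in the disc of radius `q`, then
`Re g ≥ -2 N q / (1 + q)`; the denominator is weakened to `1 + y` with `y ≤ q`, which is the form
that integrates explicitly in `log_norm_bound`. -/
lemma re_lower_of_norm {g : ℂ} {N q y : ℝ} (hN : 0 < N) (h : -N ≤ g.re) (hy : 0 < y)
    (hyq : y ≤ q) (hq : ‖g‖ ≤ q * ‖g + 2 * N‖) : -(2 * N * q / (1 + y)) ≤ g.re := by
  have hq0 : 0 < q := by linarith
  have hle : -(2 * N * q / (1 + y)) ≤ -(2 * N * q / (1 + q)) := by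
    apply neg_le_neg
    gcongr
  refine hle.trans ?_
  rw [neg_le, le_div_iff₀ (by linarith)]
  rcases le_total 1 q with h1 | h1
  · nlinarith
  · by_contra! hcon
    have h2 : ‖g‖ ^ 2 ≤ (q * ‖g + 2 * N‖) ^ 2 := by gcongr
    rw [mul_pow, Complex.sq_norm, Complex.sq_norm, normSq_apply, normSq_apply] at h2
    simp at h2
    have h3 : g.re * g.re ≤ q ^ 2 * ((g.re + 2 * N) * (g.re + 2 * N)) := by
      have : q ^ 2 ≤ 1 := by nlinarith
      nlinarith [mul_self_nonneg g.im]
    have h4 : q * (g.re + 2 * N) < -g.re := by linarith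
    have h5 : 0 ≤ q * (g.re + 2 * N) := mul_nonneg hq0.le (by linarith)
    nlinarith

/-- A two-constants estimate. If `Re g ≥ -N` on a rectangle and `|g| ≤ C` on its right side
`Re s = 51/50`, then `g / (g + 2 N)`, which is at most `1` throughout and at most `C / N` on the
right side, decays like `(C / N) ^ ((σ - 1/2) / (13/25))` on the middle line, where
`13/25 = 51/50 - 1/2`. The Gaussian factor with parameter `κ` makes the horizontal sides harmless
and costs only `exp κ`. -/
lemma rect_bound {g : ℂ → ℂ} {t Y N C κ : ℝ} (hY : 0 < Y) (hC : 0 < C) (hCN : C < N)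
    (hκ : 0 < κ) (hYN : Real.log (N / C) ≤ κ * Y ^ 2)
    (hd : ∀ s : ℂ, 1 / 2 < s.re → s.re ≤ 51 / 50 → |s.im - t| ≤ Y → DifferentiableAt ℂ g s)
    (hre : ∀ s : ℂ, 1 / 2 < s.re → s.re ≤ 51 / 50 → |s.im - t| ≤ Y → -N ≤ (g s).re)
    (hr : ∀ s : ℂ, s.re = 51 / 50 → ‖g s‖ ≤ C) {σ : ℝ} (h1 : 1 / 2 < σ) (h2 : σ ≤ 51 / 50) :
    ‖g (σ + t * I)‖ ≤ Real.exp κ * Real.exp (-(Real.log (N / C) / (13 / 25) * (σ - 1 / 2))) *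
      ‖g (σ + t * I) + 2 * N‖ := by
  have hN : 0 < N := by linarith
  set s0 : ℂ := σ + t * I with hs0
  have hs0re : s0.re = σ := by simp [hs0]
  have hs0im : s0.im = t := by simp [hs0]
  set ℓ := Real.log (N / C) with hℓ
  have hℓ0 : 0 < ℓ := Real.log_pos (by rwa [one_lt_div hC])
  set L := ℓ / (13 / 25) with hL
  have hL0 : 0 < L := by positivity
  have hpos : 0 < ‖g s0 + 2 * N‖ :=
    hN.trans_le (re_add_pos (hre s0 (by linarith) (by linarith) (by simp [hs0im]; exact hY.le)))
  -- The left side of the rectangle is `1/2 + η`, since nothing is assumed on `Re s = 1/2`; then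
  -- `η → 0`.
  suffices H : ∀ η : ℝ, 0 < η → η < σ - 1 / 2 →
      ‖g s0‖ / ‖g s0 + 2 * N‖ * Real.exp (-κ) * Real.exp (L * (σ - 1 / 2 - η)) ≤ 1 by
    have hlim : Filter.Tendsto (fun η : ℝ => ‖g s0‖ / ‖g s0 + 2 * N‖ * Real.exp (-κ) *
        Real.exp (L * (σ - 1 / 2 - η))) (nhdsWithin 0 (Set.Ioi 0))
        (nhds (‖g s0‖ / ‖g s0 + 2 * N‖ * Real.exp (-κ) * Real.exp (L * (σ - 1 / 2)))) := by
      refine Filter.Tendsto.mono_left ?_ nhdsWithin_le_nhds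
      refine Continuous.tendsto' (by fun_prop) _ _ (by simp)
    have hle := le_of_tendsto hlim (by
      filter_upwards [Ioo_mem_nhdsGT (show (0 : ℝ) < σ - 1 / 2 by linarith)] with η hη
      exact H η hη.1 hη.2)
    rw [Real.exp_neg, ← div_eq_mul_inv, div_div, div_mul_eq_mul_div,
      div_le_one (by positivity)] at hle
    rw [Real.exp_neg, mul_assoc, mul_comm _ ‖_‖, ← mul_assoc, ← div_eq_mul_inv,
      le_div_iff₀ (Real.exp_pos _)]
    linarith
  intro η hη0 hη1
  set U : Set ℂ := Set.Ioo (1 / 2 + η) (51 / 50) ×ℂ Set.Ioo (t - Y) (t + Y) with hU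
  have hcl : closure U = Set.Icc (1 / 2 + η) (51 / 50) ×ℂ Set.Icc (t - Y) (t + Y) := by
    rw [hU, closure_reProdIm, closure_Ioo (by linarith), closure_Ioo (by linarith)]
  have hmemcl : ∀ s ∈ closure U, 1 / 2 + η ≤ s.re ∧ s.re ≤ 51 / 50 ∧ |s.im - t| ≤ Y := by
    intro s hs
    rw [hcl, mem_reProdIm] at hs
    obtain ⟨⟨a1, a2⟩, a3, a4⟩ := hs
    exact ⟨a1, a2, abs_le.mpr ⟨by linarith, by linarith⟩⟩
  set F : ℂ → ℂ := fun s => g s / (g s + 2 * N) * cexp (κ * ((s - s0) ^ 2 - 1)) *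
    cexp (L * (s - 1 / 2 - η)) with hF
  have hnorm : ∀ s : ℂ, ‖F s‖ = ‖g s‖ / ‖g s + 2 * N‖ *
      Real.exp (κ * ((s.re - σ) ^ 2 - (s.im - t) ^ 2 - 1)) *
      Real.exp (L * (s.re - 1 / 2 - η)) := by
    intro s
    rw [hF]
    simp only
    rw [norm_mul, norm_mul, norm_div, norm_exp, norm_exp]
    congr 2
    · congr 1
      rw [re_ofReal_mul, sub_re, sq, mul_re, sub_re, sub_im, hs0re, hs0im, one_re]
      ring
    · rw [re_ofReal_mul]
      simp
  have hdF : DiffContOnCl ℂ F U := by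
    apply DifferentiableOn.diffContOnCl
    intro s hs
    obtain ⟨b1, b2, b3⟩ := hmemcl s hs
    have dg := hd s (by linarith) b2 b3
    have hne : g s + 2 * N ≠ 0 :=
      norm_pos_iff.mp (hN.trans_le (re_add_pos (hre s (by linarith) b2 b3)))
    have dq : DifferentiableAt ℂ (fun s => g s / (g s + 2 * N)) s :=
      dg.div (dg.add_const _) hne
    have d1 : DifferentiableAt ℂ (fun s => cexp (κ * ((s - s0) ^ 2 - 1))) s := by fun_prop
    have d2 : DifferentiableAt ℂ (fun s => cexp (L * (s - 1 / 2 - η))) s := by fun_prop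
    exact ((dq.mul d1).mul d2).differentiableWithinAt
  have hbd : Bornology.IsBounded U :=
    (Metric.isBounded_Ioo _ _).reProdIm (Metric.isBounded_Ioo _ _)
  have hfr : ∀ s ∈ frontier U, ‖F s‖ ≤ 1 := by
    intro s hs
    obtain ⟨b1, b2, b3⟩ := hmemcl s (frontier_subset_closure hs)
    have hg1 : ‖g s‖ / ‖g s + 2 * N‖ ≤ 1 :=
      div_le_one_of_le₀ (norm_le_norm_add hN (hre s (by linarith) b2 b3)) (norm_nonneg _)
    have hg0 : 0 ≤ ‖g s‖ / ‖g s + 2 * N‖ := by positivity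
    have hsq : (s.re - σ) ^ 2 ≤ 1 := by nlinarith
    have hfr' := hs
    rw [hU, frontier_reProdIm, frontier_Ioo (by linarith), frontier_Ioo (by linarith)] at hfr'
    rw [hnorm]
    have hLs : L * (s.re - 1 / 2 - η) ≤ ℓ := by
      have : L * (s.re - 1 / 2 - η) ≤ L * (13 / 25) := by
        gcongr
        linarith
      refine this.trans (le_of_eq ?_)
      rw [hL]; ring
    rcases hfr' with hh | hh
    · have him : s.im = t - Y ∨ s.im = t + Y := by simpa using hh.2
      have him2 : (s.im - t) ^ 2 = Y ^ 2 := by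
        rcases him with h | h <;> rw [h] <;> ring
      rw [mul_assoc, ← Real.exp_add]
      have : Real.exp (κ * ((s.re - σ) ^ 2 - (s.im - t) ^ 2 - 1) + L * (s.re - 1 / 2 - η)) ≤ 1 := by
        rw [Real.exp_le_one_iff, him2]
        nlinarith
      exact mul_le_one₀ hg1 (Real.exp_pos _).le this
    · have hre2 : s.re = 1 / 2 + η ∨ s.re = 51 / 50 := by simpa using hh.1
      have he1 : Real.exp (κ * ((s.re - σ) ^ 2 - (s.im - t) ^ 2 - 1)) ≤ 1 := by
        rw [Real.exp_le_one_iff]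
        nlinarith [mul_nonneg hκ.le (sq_nonneg (s.im - t))]
      rcases hre2 with h | h
      · have : L * (s.re - 1 / 2 - η) = 0 := by rw [h]; ring
        rw [this, Real.exp_zero, mul_one]
        exact mul_le_one₀ hg1 (Real.exp_pos _).le he1
      · have he2 : Real.exp (L * (s.re - 1 / 2 - η)) ≤ N / C := by
          rw [← Real.exp_log (div_pos hN hC)]
          exact Real.exp_le_exp.mpr hLs
        have hg2 : ‖g s‖ / ‖g s + 2 * N‖ ≤ C / N := by
          have := re_add_pos (hre s (by linarith) b2 b3)
          have := hr s h
          gcongr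
        calc _ ≤ C / N * 1 * (N / C) := by gcongr
          _ = 1 := by field_simp
  have hs0U : s0 ∈ closure U := by
    rw [hcl, mem_reProdIm, hs0re, hs0im]
    exact ⟨⟨by linarith, h2⟩, by linarith, by linarith⟩
  have hfin := norm_le_of_forall_mem_frontier_norm_le hbd hdF hfr hs0U
  rw [hnorm, hs0re, hs0im] at hfin
  simpa using hfin

/-- Integration of the lower bound `Re f′/f ≥ -2 N e^κ y / (1 + y)`, `y = exp (-L (x - 1/2))`, from
`σ` to `51/50`; an antiderivative of `y / (1 + y)` is `-log (1 + y) / L`, which is where `log 2`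
comes from. -/
lemma log_norm_bound {f : ℂ → ℂ} {t N C κ L : ℝ} (hN : 0 < N) (hL : 0 < L)
    (hd : ∀ x : ℝ, 1 / 2 < x → x ≤ 51 / 50 → DifferentiableAt ℂ f (x + t * I))
    (h0 : ∀ x : ℝ, 1 / 2 < x → x ≤ 51 / 50 → f (x + t * I) ≠ 0)
    (hlow : ∀ x : ℝ, 1 / 2 < x → x ≤ 51 / 50 →
      -(2 * N * (Real.exp κ * Real.exp (-(L * (x - 1 / 2)))) /
        (1 + Real.exp (-(L * (x - 1 / 2))))) ≤ (deriv f (x + t * I) / f (x + t * I)).re)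
    (hC : Real.log ‖f ((51 / 50 : ℝ) + t * I)‖ ≤ C)
    {σ : ℝ} (h1 : 1 / 2 < σ) (h2 : σ ≤ 51 / 50) :
    Real.log ‖f (σ + t * I)‖ ≤ C + 2 * N * Real.exp κ / L * Real.log 2 := by
  set Ψ : ℝ → ℝ := fun x => Real.log ‖f (x + t * I)‖ -
    2 * N * Real.exp κ / L * Real.log (1 + Real.exp (-(L * (x - 1 / 2)))) with hΨ
  have hder : ∀ x : ℝ, 1 / 2 < x → x ≤ 51 / 50 → HasDerivAt Ψ
      ((deriv f (x + t * I) / f (x + t * I)).re + 2 * N * (Real.exp κ *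
        Real.exp (-(L * (x - 1 / 2)))) / (1 + Real.exp (-(L * (x - 1 / 2))))) x := by
    intro x hx1 hx2
    have a1 := hasDerivAt_log_norm (hd x hx1 hx2) (h0 x hx1 hx2)
    have a2 : HasDerivAt (fun x : ℝ => -(L * (x - 1 / 2))) (-(L * 1)) x :=
      (((hasDerivAt_id x).sub_const _).const_mul L).neg
    have a3 := ((a2.exp.const_add 1).log (by positivity)).const_mul (2 * N * Real.exp κ / L)
    refine (a1.sub a3).congr_deriv ?_
    have : 1 + Real.exp (-(L * (x - 1 / 2))) ≠ 0 := by positivity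
    field_simp
    ring
  have hmono : MonotoneOn Ψ (Set.Icc σ (51 / 50)) := by
    refine monotoneOn_of_deriv_nonneg (convex_Icc _ _) ?_ ?_ ?_
    · intro x hx
      exact (hder x (by linarith [hx.1]) hx.2).continuousAt.continuousWithinAt
    · intro x hx
      rw [interior_Icc] at hx
      exact (hder x (by linarith [hx.1]) hx.2.le).differentiableAt.differentiableWithinAt
    · intro x hx
      rw [interior_Icc] at hx
      rw [(hder x (by linarith [hx.1]) hx.2.le).deriv]
      linarith [hlow x (by linarith [hx.1]) hx.2.le]
  have hle := hmono ⟨le_rfl, h2⟩ ⟨h2, le_rfl⟩ h2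
  simp only [hΨ] at hle
  have hK : 0 ≤ 2 * N * Real.exp κ / L := by positivity
  have g1 : Real.log (1 + Real.exp (-(L * (σ - 1 / 2)))) ≤ Real.log 2 := by
    apply Real.log_le_log (by positivity)
    have : Real.exp (-(L * (σ - 1 / 2))) ≤ 1 := by
      rw [Real.exp_le_one_iff]
      have : 0 ≤ L * (σ - 1 / 2) := mul_nonneg hL.le (by linarith)
      linarith
    linarith
  have g2 : 0 ≤ Real.log (1 + Real.exp (-(L * (51 / 50 - 1 / 2)))) :=
    Real.log_nonneg (by linarith [Real.exp_pos (-(L * (51 / 50 - 1 / 2)))])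
  have g3 := mul_le_mul_of_nonneg_left g1 hK
  have g4 := mul_nonneg hK g2
  linarith

/-! ### The bound for zeta -/

/-- The estimate with explicit logarithms: with `N = ½ log (|t| + 3) + 4`, the main
term is `2 N e^(1/100) (13/25) log 2 / log (N / C)`. -/
lemma zeta_log_bound (hRH : RiemannHypothesis) : ∃ C ≥ (1 : ℝ), ∀ t : ℝ, 497 ≤ |t| →
    C < 1 / 2 * Real.log (|t| + 3) + 4 →
    (∀ σ : ℝ, 51 / 50 ≤ σ → ‖riemannZeta (σ + t * I)‖ ≤ C) ∧
    ∀ σ : ℝ, 1 / 2 < σ → σ ≤ 51 / 50 → Real.log ‖riemannZeta (σ + t * I)‖ ≤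
      Real.log C + 2 * (1 / 2 * Real.log (|t| + 3) + 4) * Real.exp (1 / 100) /
        (Real.log ((1 / 2 * Real.log (|t| + 3) + 4) / C) / (13 / 25)) * Real.log 2 := by
  obtain ⟨C, hC1, hC⟩ := zeta_right_bounds (x := 51 / 50) (by norm_num)
  refine ⟨C, hC1, fun t ht hCN => ⟨fun σ hσ => (hC _ (by simpa using hσ)).1, ?_⟩⟩
  set τ := |t| + 3 with hτ
  set N := 1 / 2 * Real.log τ + 4 with hN
  have hτ0 : 0 < τ := by positivity
  have hC0 : 0 < C := by linarith
  have hN0 : 0 < N := by linarith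
  have hne : ∀ s : ℂ, 1 ≤ |s.im| → s ≠ 1 := by
    rintro w hw rfl; norm_num at hw
  have him : ∀ s : ℂ, |s.im - t| ≤ |t| / 2 → 1 ≤ |s.im| ∧ |s.im| ≤ 3 / 2 * |t| := by
    intro s hs
    have h1 := abs_sub_abs_le_abs_sub t s.im
    have h2 := abs_sub_abs_le_abs_sub s.im t
    rw [abs_sub_comm] at h1
    constructor <;> linarith
  have hlow : ∀ s : ℂ, 1 / 2 < s.re → s.re ≤ 51 / 50 → |s.im - t| ≤ |t| / 2 →
      -N ≤ (deriv riemannZeta s / riemannZeta s).re := by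
    intro s h1 h2 h3
    obtain ⟨i1, i2⟩ := him s h3
    refine le_trans ?_ (logDeriv_zeta_lower hRH h1 i1)
    have hn : ‖s / 2 + 1‖ ≤ τ := by
      refine (norm_le_abs_re_add_abs_im _).trans ?_
      simp only [add_re, add_im, one_re, one_im, div_ofNat_re, div_ofNat_im, add_zero]
      rw [abs_of_pos (by linarith), abs_div, abs_of_pos (by norm_num : (0 : ℝ) < 2)]
      linarith
    have hp : 0 < ‖s / 2 + 1‖ := by
      refine lt_of_lt_of_le ?_ (re_le_norm _)
      simp; linarith
    have := Real.log_le_log hp hn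
    linarith
  have hℓ : 0 < Real.log (N / C) := Real.log_pos (by rwa [one_lt_div hC0])
  have hYN : Real.log (N / C) ≤ 1 / 100 * (|t| / 2) ^ 2 := by
    have h1 : N / C ≤ N := div_le_self hN0.le hC1
    have h2 : Real.log τ ≤ τ - 1 := Real.log_le_sub_one_of_pos hτ0
    have h3 : Real.log (N / C) ≤ N / C - 1 := Real.log_le_sub_one_of_pos (by positivity)
    nlinarith
  intro σ h1 h2
  have hI : ∀ x : ℝ, (x + t * I : ℂ).re = x ∧ (x + t * I : ℂ).im = t := fun x => by simp
  refine log_norm_bound (f := riemannZeta) hN0 (by positivity) ?_ ?_ ?_ ?_ h1 h2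
  · intro x _ _
    exact differentiableAt_riemannZeta (hne _ (by rw [(hI x).2]; linarith))
  · intro x hx _
    exact zeta_ne_zero hRH (by rw [(hI x).1]; exact hx) (hne _ (by rw [(hI x).2]; linarith))
  · intro x hx1 hx2
    have hb := rect_bound (g := fun s => deriv riemannZeta s / riemannZeta s) (t := t)
      (Y := |t| / 2) (N := N) (C := C) (κ := 1 / 100) (by linarith) hC0 hCN (by norm_num) hYN
      (by
        intro s s1 s2 s3
        have hs1 := hne s (him s s3).1
        have hdz : DifferentiableOn ℂ riemannZeta {1}ᶜ := fun w hw =>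
          (differentiableAt_riemannZeta hw).differentiableWithinAt
        exact ((hdz.deriv isOpen_compl_singleton).differentiableAt
          (isOpen_compl_singleton.mem_nhds hs1)).div (differentiableAt_riemannZeta hs1)
          (zeta_ne_zero hRH s1 hs1))
      hlow (fun s hs => (hC s hs.ge).2.2) hx1 hx2
    have hl := hlow (x + t * I) (by rw [(hI x).1]; exact hx1) (by rw [(hI x).1]; exact hx2)
      (by rw [(hI x).2, sub_self, abs_zero]; positivity)
    refine re_lower_of_norm hN0 hl (Real.exp_pos _) ?_ hb
    exact le_mul_of_one_le_left (Real.exp_pos _).le (Real.one_le_exp (by norm_num))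
  · have hz : riemannZeta ((51 / 50 : ℝ) + t * I) ≠ 0 :=
      riemannZeta_ne_zero_of_one_le_re (by rw [(hI _).1]; norm_num)
    exact Real.log_le_log (norm_pos_iff.mpr hz) (hC _ (by rw [(hI _).1])).1

/-- With `ℓ = log (|t| + 3)`, the main term of `zeta_log_bound` is asymptotic to
`e^(1/100) (13/25) (log 2) ℓ / log ℓ`, whose constant is about `0.364 < 2/5`. -/
lemma asymptotic_bound (C : ℝ) (hC : 1 ≤ C) : ∀ᶠ ℓ : ℝ in Filter.atTop,
    C < 1 / 2 * ℓ + 4 ∧ Real.log C ≤ 2 / 5 * (ℓ / Real.log ℓ) ∧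
    Real.log C + 2 * (1 / 2 * ℓ + 4) * Real.exp (1 / 100) /
        (Real.log ((1 / 2 * ℓ + 4) / C) / (13 / 25)) * Real.log 2 ≤
      2 / 5 * (ℓ / Real.log ℓ) := by
  have hlogC : 0 ≤ Real.log C := Real.log_nonneg hC
  have ev1 : ∀ᶠ ℓ : ℝ in Filter.atTop, max 1 (100 * Real.log (2 * C)) ≤ Real.log ℓ :=
    Real.tendsto_log_atTop.eventually_ge_atTop _
  have ev2 : ∀ᶠ ℓ : ℝ in Filter.atTop, ‖Real.log ℓ‖ ≤ 1 / (1000 * (Real.log C + 1)) * ‖id ℓ‖ :=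
    Real.isLittleO_log_id_atTop.def (by positivity)
  filter_upwards [ev1, ev2, Filter.eventually_ge_atTop 1000, Filter.eventually_ge_atTop (2 * C)]
    with ℓ h1 h2 h3 h4
  have hlog1 : 1 ≤ Real.log ℓ := (le_max_left _ _).trans h1
  have hlog2 : 100 * Real.log (2 * C) ≤ Real.log ℓ := (le_max_right _ _).trans h1
  set m := Real.log ℓ with hm
  have hm0 : 0 < m := by linarith
  rw [id, Real.norm_of_nonneg hm0.le, Real.norm_of_nonneg (by linarith)] at h2
  set X := ℓ / m with hX
  have hX0 : 0 < X := by positivity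
  have hc : Real.log C ≤ 1 / 1000 * X := by
    rw [hX, ← mul_div_assoc, le_div_iff₀ hm0]
    have hp : 0 < Real.log C + 1 := by linarith
    have : (Real.log C + 1) * m ≤ 1 / 1000 * ℓ := by
      calc _ ≤ (Real.log C + 1) * (1 / (1000 * (Real.log C + 1)) * ℓ) := by gcongr
        _ = _ := by field_simp
    nlinarith
  refine ⟨by linarith, by linarith, ?_⟩
  have hden : 99 / 100 * m ≤ Real.log ((1 / 2 * ℓ + 4) / C) := by
    have e : Real.log (ℓ / (2 * C)) ≤ Real.log ((1 / 2 * ℓ + 4) / C) := by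
      apply Real.log_le_log (by positivity)
      rw [div_le_div_iff₀ (by positivity) (by positivity)]
      nlinarith
    rw [Real.log_div (by linarith) (by positivity), ← hm] at e
    linarith
  have hE : Real.exp (1 / 100) ≤ 51 / 50 := by
    have := Real.exp_bound_div_one_sub_of_interval (x := 1 / 100) (by norm_num) (by norm_num)
    norm_num at this ⊢
    linarith
  have hl2 : Real.log 2 ≤ 7 / 10 := by linarith [Real.log_two_lt_d9]
  have hl20 : 0 ≤ Real.log 2 := Real.log_nonneg (by norm_num)
  have hbig : 2 * (1 / 2 * ℓ + 4) * Real.exp (1 / 100) /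
        (Real.log ((1 / 2 * ℓ + 4) / C) / (13 / 25)) * Real.log 2 ≤
      2 * (51 / 100 * ℓ) * (51 / 50) / (99 / 100 * m / (13 / 25)) * (7 / 10) := by
    gcongr
    linarith
  have e : 2 * (51 / 100 * ℓ) * (51 / 50) / (99 / 100 * m / (13 / 25)) * (7 / 10) =
      (2 * (51 / 100) * (51 / 50) * (13 / 25) / (99 / 100) * (7 / 10)) * X := by
    rw [hX]; field_simp
  rw [e] at hbig
  norm_num at hbig ⊢
  linarith

/-- Assuming RH: there is a `τ₀ > 0` such that for all `t` with `|t| + 3 ≥ τ₀`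
and all `σ ≥ 1/2`, writing `τ = |t| + 3`, one has
`log⁺|ζ(σ+it)| ≤ (2/5) · log τ / log log τ`. -/
theorem logPlus_zeta_global_upper_bound (hRH : RiemannHypothesis) :
    ∃ τ₀ > (0 : ℝ), ∀ t σ : ℝ, τ₀ ≤ |t| + 3 → 1 / 2 ≤ σ →
      logPlus ‖riemannZeta (σ + t * I)‖ ≤
        2 / 5 * (Real.log (|t| + 3) / Real.log (Real.log (|t| + 3))) := by
  obtain ⟨C, hC1, hC⟩ := zeta_log_bound hRH
  obtain ⟨τ₁, hτ₁⟩ := Filter.eventually_atTop.mp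
    (Real.tendsto_log_atTop.eventually (asymptotic_bound C hC1))
  refine ⟨max 500 τ₁, by positivity, fun t σ ht hσ => ?_⟩
  have ht1 : 497 ≤ |t| := by linarith [(le_max_left 500 τ₁).trans ht]
  obtain ⟨A1, A2, A3⟩ := hτ₁ _ ((le_max_right 500 τ₁).trans ht)
  obtain ⟨B1, B2⟩ := hC t ht1 A1
  set R := 2 / 5 * (Real.log (|t| + 3) / Real.log (Real.log (|t| + 3))) with hR
  have hR0 : 0 ≤ R := (Real.log_nonneg hC1).trans A2
  have hne : ∀ x : ℝ, (x + t * I : ℂ) ≠ 1 := by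
    intro x h
    have := congrArg im h
    simp at this
    rw [this] at ht1
    norm_num at ht1
  have hmid : ∀ x : ℝ, 1 / 2 < x → x ≤ 51 / 50 → ‖riemannZeta (x + t * I)‖ ≤ Real.exp R := by
    intro x hx1 hx2
    have hz : riemannZeta (x + t * I) ≠ 0 := zeta_ne_zero hRH (by simpa using hx1) (hne x)
    rw [← Real.log_le_iff_le_exp (norm_pos_iff.mpr hz)]
    exact (B2 x hx1 hx2).trans A3
  have hmain : ‖riemannZeta (σ + t * I)‖ ≤ Real.exp R := by
    rcases le_total (51 / 50) σ with h | h
    · refine (B1 σ h).trans ?_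
      rw [← Real.log_le_iff_le_exp (by linarith)]
      exact A2
    · rcases hσ.eq_or_lt with rfl | h'
      · have hcont : ContinuousAt (fun x : ℝ => ‖riemannZeta (x + t * I)‖) (1 / 2) := by
          have h1 := (differentiableAt_riemannZeta (hne (1 / 2))).continuousAt
          exact (ContinuousAt.comp (f := fun x : ℝ => (x + t * I : ℂ)) h1
            (by fun_prop)).norm
        have hl := (hcont.tendsto).mono_left
          (nhdsWithin_le_nhds (s := Set.Ioi (1 / 2 : ℝ)))
        refine le_of_tendsto hl ?_
        filter_upwards [Ioo_mem_nhdsGT (show (1 / 2 : ℝ) < 51 / 50 by norm_num)] with x hx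
        exact hmid x hx.1 hx.2.le
      · exact hmid σ h' h
  rw [logPlus]
  split_ifs with hlt
  · exact hR0
  · rw [abs_of_nonneg (norm_nonneg _)] at hlt ⊢
    rwa [Real.log_le_iff_le_exp (by linarith)]
end

section
/- Assume the Riemann Hypothesis. There exists an absolute constant C > 0 such that for every complex number α with |α| ≤ 1 and |Re α − 1/2| ≤ (log T)^{-1}, and every non-trivial zero ρ = 1/2 + iγ of ζ(s) with 0 < γ ≤ T, one has |ζ(ρ + α)| ≤ C · |ζ(ρ − \bar{α})|, where \bar{α} denotes the complex conjugate of α. -/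
/-!
Under the Riemann Hypothesis `Re ρ = 1/2`, so with `w = ρ - conj α` one has `ρ + α = conj (1 - w)`,
and the functional equation gives `|ζ(ρ + α)| = |ζ(1 - w)| = |χ| |ζ(w)|` with
`χ = 2 (2π)^(-w) Γ(w) cos (π w / 2)`. It remains to bound `χ` uniformly. Here
`Re w = 1/2 - Re α` and `Im w = γ + Im α`.

* `χ` has a pole at `w = 0`, so `w` has to stay away from it. This follows from the absence of zeros
  with `0 < γ ≤ 2` (`two_lt_im_of_riemannZeta_eq_zero`), which yields `Im w ≥ 1`. That zero-free
  range comes from `Λ(s) = Λ₀(s) - 1 / s - 1 / (1 - s)` and an explicit estimate of the Mellin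
  integral of the theta function that defines `Λ₀`.
* If `log T > 2`, then `Re α ≥ 0`, so `|Re w| ≤ 1/2`, where `|Γ(w)|` is at most a constant times
  `exp (-π Im w / 2)` (`exists_norm_Gamma_le`). This comes from the exact value of `|Γ(1/2 + it)|`
  and the monotonicity in `v` of `|Γ(v + it)| / Γ(v)`. The cosine is at most `exp (π Im w / 2)`, so
  `χ` is bounded.
* If `log T ≤ 2`, then `w` ranges over a compact rectangle on which `χ` is continuous.
-/

open Complex

/-! ### Low-lying zeros -/

/-- A polynomial majorant of `exp (-π t)`, from `20 ≤ exp 3`, `t ≤ exp (t - 1)` and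
`3 + 2 (t - 1) ≤ π t`. It makes the Mellin integral below elementary. -/
lemma exp_neg_pi_mul_le {t : ℝ} (ht : 1 ≤ t) :
    Real.exp (-Real.pi * t) ≤ 1 / 20 * t ^ (-2 : ℝ) := by
  have h3 : (20 : ℝ) ≤ Real.exp 3 := by
    have h := Real.exp_one_gt_d9
    have : Real.exp 3 = Real.exp 1 ^ 3 := by rw [← Real.exp_nat_mul]; norm_num
    rw [this]
    calc (20 : ℝ) ≤ 2.7182818283 ^ 3 := by norm_num
      _ ≤ _ := by gcongr
  have ht1 : t ≤ Real.exp (t - 1) := by linarith [Real.add_one_le_exp (t - 1)]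
  have h : 20 * t ^ 2 ≤ Real.exp (Real.pi * t) := by
    calc 20 * t ^ 2 ≤ Real.exp 3 * Real.exp (t - 1) ^ 2 := by gcongr
      _ = Real.exp (3 + 2 * (t - 1)) := by rw [Real.exp_add, ← Real.exp_nat_mul]; norm_num
      _ ≤ _ := by
        apply Real.exp_le_exp.mpr
        nlinarith [Real.pi_gt_three]
  rw [neg_mul, Real.exp_neg, Real.rpow_neg (by linarith), Real.rpow_two]
  calc (Real.exp (Real.pi * t))⁻¹ ≤ (20 * t ^ 2)⁻¹ := by gcongr
    _ = _ := by rw [mul_inv]; norm_num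

/-- The kernel `cosKernel 0 t` is the theta series `∑ exp (-π n² t)` over `n ∈ ℤ`; it is within
`O(exp (-π t))` of its constant term. -/
lemma abs_cosKernel_sub_one_le {t : ℝ} (ht : 1 ≤ t) :
    |HurwitzZeta.cosKernel 0 t - 1| ≤ 11 / 100 * t ^ (-2 : ℝ) := by
  have him : (I * (t : ℂ)).im = t := by simp
  have h1 := norm_jacobiTheta_sub_one_le (τ := I * t) (by rw [him]; linarith)
  rw [him] at h1
  have h2 : jacobiTheta (I * t) = (HurwitzZeta.cosKernel 0 t : ℂ) := by
    have := HurwitzZeta.cosKernel_def 0 t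
    rw [jacobiTheta_eq_jacobiTheta₂]
    simpa using this.symm
  rw [h2, ← ofReal_one, ← ofReal_sub, norm_real, Real.norm_eq_abs] at h1
  have hq := exp_neg_pi_mul_le ht
  have hp : t ^ (-2 : ℝ) ≤ 1 := Real.rpow_le_one_of_one_le_of_nonpos ht (by norm_num)
  have hq' : Real.exp (-Real.pi * t) ≤ 1 / 20 := by linarith
  calc _ ≤ _ := h1
    _ ≤ 2 / (1 - 1 / 20) * (1 / 20 * t ^ (-2 : ℝ)) := by gcongr
    _ ≤ _ := by nlinarith [Real.rpow_nonneg (by linarith : 0 ≤ t) (-2)]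

/-- `Λ₀(s)` is half of the Mellin transform at `s / 2` of the theta series with its singular parts at
`0` and `∞` removed, so on the critical line it is bounded by the integral of an explicit majorant. -/
lemma norm_completedRiemannZeta₀_le {s : ℂ} (hs : s.re = 1 / 2) :
    ‖completedRiemannZeta₀ s‖ ≤ 11 / 100 := by
  set g : ℝ → ℝ := fun x ↦ if x ≤ 1 then 11 / 100 else 11 / 100 * x ^ (-2 : ℝ) with hg
  have hg1 : ∀ x ∈ Set.Ioc (0 : ℝ) 1, g x = 11 / 100 := fun x hx ↦ by simp [hg, hx.2]
  have hg2 : ∀ x ∈ Set.Ioi (1 : ℝ), g x = 11 / 100 * x ^ (-2 : ℝ) := fun x hx ↦ by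
    rw [hg]; exact if_neg (not_le.mpr (Set.mem_Ioi.mp hx))
  have hi1 : MeasureTheory.IntegrableOn g (Set.Ioc 0 1) :=
    (MeasureTheory.integrableOn_congr_fun hg1 measurableSet_Ioc).mpr (by simp)
  have hi2 : MeasureTheory.IntegrableOn g (Set.Ioi 1) :=
    (MeasureTheory.integrableOn_congr_fun hg2 measurableSet_Ioi).mpr
      ((integrableOn_Ioi_rpow_of_lt (by norm_num) one_pos).const_mul _)
  have hu : Set.Ioc (0 : ℝ) 1 ∪ Set.Ioi 1 = Set.Ioi 0 := Set.Ioc_union_Ioi_eq_Ioi zero_le_one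
  have hint : ∫ x in Set.Ioi (0 : ℝ), g x = 22 / 100 := by
    rw [← hu, MeasureTheory.setIntegral_union (Set.Ioc_disjoint_Ioi le_rfl) measurableSet_Ioi hi1 hi2,
      MeasureTheory.setIntegral_congr_fun measurableSet_Ioc hg1,
      MeasureTheory.setIntegral_congr_fun measurableSet_Ioi hg2,
      MeasureTheory.integral_const_mul, integral_Ioi_rpow_of_lt (by norm_num) one_pos]
    norm_num
  have hre : (s / 2 - 1).re = -3 / 4 := by simp [hs]; norm_num
  have key : ‖(HurwitzZeta.hurwitzEvenFEPair 0).Λ₀ (s / 2)‖ ≤ ∫ x in Set.Ioi (0 : ℝ), g x := by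
    refine MeasureTheory.norm_integral_le_of_norm_le (hu ▸ hi1.union hi2) ?_
    refine (MeasureTheory.ae_restrict_iff' measurableSet_Ioi).mpr (.of_forall fun x hx ↦ ?_)
    have hx0 : 0 < x := hx
    rw [norm_smul, norm_cpow_eq_rpow_re_of_pos hx0, hre, WeakFEPair.f_modif]
    rcases lt_trichotomy x 1 with h | h | h
      -- On `(0, 1)` the inversion formula for theta reduces to the estimate at `1 / x > 1`.
    · have hker : HurwitzZeta.evenKernel 0 x - x ^ (-(1 / 2) : ℝ) =
          x ^ (-(1 / 2) : ℝ) * (HurwitzZeta.cosKernel 0 (1 / x) - 1) := by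
        rw [HurwitzZeta.evenKernel_functional_equation, Real.rpow_neg hx0.le]
        ring
      have hb := abs_cosKernel_sub_one_le ((one_le_div hx0).mpr h.le)
      rw [one_div, Real.inv_rpow hx0.le, Real.rpow_neg hx0.le, inv_inv] at hb
      rw [hg1 x ⟨hx0, h.le⟩, Pi.add_apply, Set.indicator_of_notMem (by simp [h.le]),
        Set.indicator_of_mem (Set.mem_Ioo.mpr ⟨hx0, h⟩), zero_add]
      have : (HurwitzZeta.hurwitzEvenFEPair 0).f x - ((HurwitzZeta.hurwitzEvenFEPair 0).ε *
          ↑(x ^ (-(HurwitzZeta.hurwitzEvenFEPair 0).k))) • (HurwitzZeta.hurwitzEvenFEPair 0).g₀ =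
          ((HurwitzZeta.evenKernel 0 x - x ^ (-(1 / 2) : ℝ) : ℝ) : ℂ) := by
        simp [HurwitzZeta.hurwitzEvenFEPair]
      rw [this, hker, norm_real, Real.norm_eq_abs, abs_mul, abs_of_nonneg (by positivity)]
      calc x ^ (-3 / 4 : ℝ) * (x ^ (-(1 / 2) : ℝ) * |HurwitzZeta.cosKernel 0 (1 / x) - 1|)
          ≤ x ^ (-3 / 4 : ℝ) * (x ^ (-(1 / 2) : ℝ) * (11 / 100 * x ^ (2 : ℝ))) := by
            gcongr
            simpa using hb
        _ = 11 / 100 * (x ^ (-3 / 4 : ℝ) * x ^ (-(1 / 2) : ℝ) * x ^ (2 : ℝ)) := by ring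
        _ = 11 / 100 * x ^ (3 / 4 : ℝ) := by
            rw [← Real.rpow_add hx0, ← Real.rpow_add hx0]; norm_num
        _ ≤ 11 / 100 := by
            have := Real.rpow_le_one hx0.le h.le (by norm_num : (0 : ℝ) ≤ 3 / 4)
            linarith
      -- `f_modif` vanishes at `1` by definition.
    · rw [hg1 x ⟨hx0, h.le⟩]
      simp [h]; norm_num
    · rw [hg2 x h, Pi.add_apply, Set.indicator_of_mem (Set.mem_Ioi.mpr h),
        Set.indicator_of_notMem (by simp [h.le]), add_zero]
      have : (HurwitzZeta.hurwitzEvenFEPair 0).f x - (HurwitzZeta.hurwitzEvenFEPair 0).f₀ =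
          ((HurwitzZeta.cosKernel 0 x - 1 : ℝ) : ℂ) := by
        simp [HurwitzZeta.hurwitzEvenFEPair, HurwitzZeta.evenKernel_eq_cosKernel_of_zero]
      rw [this, norm_real, Real.norm_eq_abs]
      exact (mul_le_of_le_one_left (abs_nonneg _)
        (Real.rpow_le_one_of_one_le_of_nonpos h.le (by norm_num))).trans
        (abs_cosKernel_sub_one_le h.le)
  rw [completedRiemannZeta₀, HurwitzZeta.completedHurwitzZetaEven₀, norm_div, norm_ofNat]
  linarith

/-- There is no zero of height at most `2` on the critical line: at a zero,
`Λ₀(s) = 1 / s + 1 / (1 - s) = 1 / (1 / 4 + γ²)`, which is at least `4 / 17` when `γ ≤ 2`, whereas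
`|Λ₀(s)| ≤ 11 / 100`. -/
lemma two_lt_im_of_riemannZeta_eq_zero {s : ℂ} (hs : s.re = 1 / 2) (h0 : 0 < s.im)
    (hz : riemannZeta s = 0) : 2 < s.im := by
  by_contra! him
  have hs0 : s ≠ 0 := by rintro rfl; norm_num at hs
  have hs1 : 1 - s ≠ 0 := fun h ↦ by
    have := congrArg re h
    simp [hs] at this; norm_num at this
  rw [riemannZeta_def_of_ne_zero hs0, div_eq_zero_iff, completedRiemannZeta_eq] at hz
  have hz := hz.resolve_right (Gammaℝ_ne_zero_of_re_pos (by rw [hs]; norm_num))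
  have hval : completedRiemannZeta₀ s = ((1 / (1 / 4 + s.im ^ 2) : ℝ) : ℂ) := by
    have hprod : s * (1 - s) = ((1 / 4 + s.im ^ 2 : ℝ) : ℂ) := by
      apply Complex.ext <;> simp [hs, pow_two, -ofReal_add] <;> ring
    calc completedRiemannZeta₀ s = 1 / s + 1 / (1 - s) := by linear_combination hz
      _ = 1 / (s * (1 - s)) := by field_simp; ring
      _ = _ := by rw [hprod]; push_cast; rfl
  have hb := norm_completedRiemannZeta₀_le hs
  rw [hval, norm_real, Real.norm_of_nonneg (by positivity), div_le_iff₀ (by positivity)] at hb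
  nlinarith

/-! ### The Gamma function on vertical lines -/

lemma norm_betaIntegral_le (z : ℂ) (r : ℝ) :
    ‖betaIntegral z r‖ ≤ ‖betaIntegral z.re r‖ := by
  have h1 : betaIntegral z.re r =
      ((∫ x : ℝ in 0..1, x ^ (z.re - 1) * (1 - x) ^ (r - 1) : ℝ) : ℂ) := by
    rw [betaIntegral, ← intervalIntegral.integral_ofReal]
    refine intervalIntegral.integral_congr fun x hx ↦ ?_
    rw [Set.uIcc_of_le zero_le_one] at hx
    rw [ofReal_mul, ofReal_cpow hx.1, ofReal_cpow (by linarith [hx.2])]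
    push_cast
    rfl
  rw [h1, norm_real]
  refine le_trans ?_ (le_abs_self _)
  refine (intervalIntegral.norm_integral_le_integral_norm zero_le_one).trans_eq ?_
  refine intervalIntegral.integral_congr_ae ?_
  have h01 : ∀ᵐ x : ℝ, x ≠ 1 := by simp [MeasureTheory.ae_iff]
  filter_upwards [h01] with x hx1 hx
  rw [Set.uIoc_of_le zero_le_one] at hx
  have h2 : 0 < 1 - x := by have := lt_of_le_of_ne hx.2 hx1; linarith
  rw [norm_mul, norm_cpow_eq_rpow_re_of_pos hx.1, ← ofReal_one, ← ofReal_sub,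
    norm_cpow_eq_rpow_re_of_pos h2]
  simp

/-- For a fixed imaginary part `t`, the ratio `|Γ(v + it)| / Γ(v)` is nondecreasing in `v > 0`:
write both quotients as Beta integrals and use `|B(z, r)| ≤ B(Re z, r)`. -/
lemma norm_Gamma_mul_Gamma_le {z : ℂ} {r : ℝ} (hz : 0 < z.re) (hr : 0 ≤ r) :
    ‖Gamma z‖ * Real.Gamma (z.re + r) ≤ ‖Gamma (z + r)‖ * Real.Gamma z.re := by
  rcases hr.eq_or_lt with rfl | hr
  · simp
  have hGr := Real.Gamma_pos_of_pos hr
  have hGs := Real.Gamma_pos_of_pos (add_pos hz hr)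
  have hGz := Real.Gamma_pos_of_pos hz
  have h1 := congrArg norm (Gamma_mul_Gamma_eq_betaIntegral (s := z) (t := r) hz (by simpa))
  have h2 := congrArg norm
    (Gamma_mul_Gamma_eq_betaIntegral (s := (z.re : ℂ)) (t := r) (by simpa) (by simpa))
  rw [← ofReal_add] at h2
  simp only [norm_mul, Gamma_ofReal, norm_real, Real.norm_of_nonneg hGr.le,
    Real.norm_of_nonneg hGz.le, Real.norm_of_nonneg hGs.le] at h1 h2
  refine le_of_mul_le_mul_right ?_ hGr
  calc ‖Gamma z‖ * Real.Gamma (z.re + r) * Real.Gamma r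
      = ‖Gamma (z + r)‖ * Real.Gamma (z.re + r) * ‖betaIntegral z r‖ := by
        linear_combination Real.Gamma (z.re + r) * h1
    _ ≤ ‖Gamma (z + r)‖ * Real.Gamma (z.re + r) * ‖betaIntegral z.re r‖ := by
        gcongr; exact norm_betaIntegral_le z r
    _ = _ := by linear_combination -‖Gamma (z + r)‖ * h2

/-- The reflection formula gives `|Γ(1/2 + it)|² = π / cosh (π t)` exactly. -/
lemma norm_Gamma_half_add_le (t : ℝ) :
    ‖Gamma (1 / 2 + t * I)‖ ≤ 3 * Real.exp (-(Real.pi * t / 2)) := by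
  have hconj : 1 - (1 / 2 + t * I : ℂ) = (starRingEnd ℂ) (1 / 2 + t * I) := by
    apply Complex.ext <;> simp; norm_num
  have h := congrArg norm (Gamma_mul_Gamma_one_sub (1 / 2 + t * I))
  have hsin : sin (Real.pi * (1 / 2 + t * I)) = (Real.cosh (Real.pi * t) : ℂ) := by
    rw [show (Real.pi * (1 / 2 + t * I) : ℂ) = (Real.pi * t : ℝ) * I + Real.pi / 2 by
      push_cast; ring, sin_add_pi_div_two, cos_mul_I, ofReal_cosh]
  rw [hconj, Gamma_conj, hsin, norm_mul, norm_conj, norm_div, norm_real, norm_real,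
    Real.norm_of_nonneg Real.pi_pos.le, Real.norm_of_nonneg (Real.cosh_pos _).le] at h
  have hc : Real.exp (Real.pi * t) / 2 ≤ Real.cosh (Real.pi * t) := by
    rw [Real.cosh_eq]; linarith [Real.exp_pos (-(Real.pi * t))]
  refine le_of_sq_le_sq ?_ (by positivity)
  calc ‖Gamma (1 / 2 + t * I)‖ ^ 2 = Real.pi / Real.cosh (Real.pi * t) := by rw [← h, sq]
    _ ≤ Real.pi / (Real.exp (Real.pi * t) / 2) := by gcongr
    _ = 2 * Real.pi * Real.exp (-(Real.pi * t)) := by rw [Real.exp_neg]; field_simp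
    _ ≤ 9 * Real.exp (-(Real.pi * t)) := by
        gcongr; linarith [Real.pi_lt_d2]
    _ = _ := by rw [mul_pow, ← Real.exp_nat_mul]; norm_num; ring_nf

lemma norm_cos_le_exp_abs_im (z : ℂ) : ‖cos z‖ ≤ Real.exp |z.im| := by
  rw [Complex.cos, norm_div, norm_ofNat]
  have h := norm_add_le (exp (z * I)) (exp (-z * I))
  rw [norm_exp, norm_exp] at h
  simp only [mul_re, I_re, I_im, neg_re, neg_im] at h
  have h1 : Real.exp (z.re * 0 - z.im * 1) ≤ Real.exp |z.im| :=
    Real.exp_le_exp.mpr (by linarith [neg_le_abs z.im])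
  have h2 : Real.exp (-z.re * 0 - -z.im * 1) ≤ Real.exp |z.im| :=
    Real.exp_le_exp.mpr (by linarith [le_abs_self z.im])
  linarith

/-- Uniform decay of `Γ` in the half-strip `|Re w| ≤ 1/2`, `Im w ≥ 1`. With `t = Im w`, monotonicity of
`|Γ(v + it)| / Γ(v)` compares `Γ(w + 1) = w Γ(w)` with `Γ(3/2 + it) = (1/2 + it) Γ(1/2 + it)`; the
factors `w` and `1/2 + it` are both of size `t`, so no power of `t` is lost. -/
lemma exists_norm_Gamma_le : ∃ C > (0 : ℝ), ∀ w : ℂ, -(1 / 2) ≤ w.re → w.re ≤ 1 / 2 → 1 ≤ w.im →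
    ‖Gamma w‖ ≤ C * Real.exp (-(Real.pi * w.im / 2)) := by
  set M := max (Real.Gamma (1 / 2)) (Real.Gamma (3 / 2)) with hM
  have hG : 0 < Real.Gamma (3 / 2) := Real.Gamma_pos_of_pos (by norm_num)
  have hMpos : 0 < M := lt_max_of_lt_right hG
  refine ⟨9 / 2 * M / Real.Gamma (3 / 2), by positivity, fun w h1 h2 h3 ↦ ?_⟩
  have hw0 : w ≠ 0 := by rintro rfl; norm_num at h3
  have hb := norm_Gamma_mul_Gamma_le (z := w + 1) (r := 1 / 2 - w.re)
    (by simp; linarith) (by linarith)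
  have hz : w + 1 + ((1 / 2 - w.re : ℝ) : ℂ) = (1 / 2 + w.im * I) + 1 := by
    apply Complex.ext <;> simp; ring
  have hne : (1 / 2 + w.im * I : ℂ) ≠ 0 := fun h ↦ by
    have := congrArg re h
    norm_num at this
  have hr : (w + 1).re + (1 / 2 - w.re) = 3 / 2 := by simp; ring
  rw [hz, hr, Gamma_add_one _ hne, Gamma_add_one _ hw0, norm_mul, norm_mul] at hb
  -- `Γ` is convex on `(0, ∞)`, hence bounded on `[1/2, 3/2]` by its values at the endpoints.
  have hGM : Real.Gamma (w + 1).re ≤ M :=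
    Real.convexOn_Gamma.le_max_of_mem_Icc (by norm_num) (by norm_num)
      (by constructor <;> simp <;> linarith)
  have hGv : 0 ≤ Real.Gamma (w + 1).re := (Real.Gamma_pos_of_pos (by simp; linarith)).le
  have hw : w.im ≤ ‖w‖ := (le_abs_self _).trans (abs_im_le_norm w)
  have hhalf : ‖(1 / 2 + w.im * I : ℂ)‖ ≤ 3 / 2 * w.im := by
    refine (norm_add_le _ _).trans ?_
    simp [abs_of_pos (by linarith : 0 < w.im)]
    linarith
  have hcrit := norm_Gamma_half_add_le w.im
  set E := Real.exp (-(Real.pi * w.im / 2))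
  have hE : 0 < E := Real.exp_pos _
  have hfin : w.im * (‖Gamma w‖ * Real.Gamma (3 / 2)) ≤ w.im * (9 / 2 * M * E) := by
    calc w.im * (‖Gamma w‖ * Real.Gamma (3 / 2)) = w.im * ‖Gamma w‖ * Real.Gamma (3 / 2) := by ring
      _ ≤ ‖w‖ * ‖Gamma w‖ * Real.Gamma (3 / 2) := by gcongr
      _ ≤ _ := hb
      _ ≤ 3 / 2 * w.im * (3 * E) * M := by gcongr
      _ = _ := by ring
  have := le_of_mul_le_mul_left hfin (by linarith)
  rw [div_mul_eq_mul_div, le_div_iff₀ hG]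
  exact this

/-! ### The factor in the functional equation -/

/-- The factor `2 (2π)^(-w) Γ(w) cos (π w / 2)` in the functional equation
`ζ(1 - w) = reflectionFactor w * ζ(w)`; it equals `χ(1 - w)` in the notation `ζ(s) = χ(s) ζ(1 - s)`. -/
noncomputable def reflectionFactor (w : ℂ) : ℂ :=
  2 * (2 * Real.pi) ^ (-w) * Gamma w * cos (Real.pi * w / 2)

lemma riemannZeta_one_sub_eq {w : ℂ} (hw : w.im ≠ 0) :
    riemannZeta (1 - w) = reflectionFactor w * riemannZeta w :=
  riemannZeta_one_sub (fun n h ↦ hw (by simp [h])) (fun h ↦ hw (by simp [h]))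

/-- The exponential growth of the cosine cancels the decay of `Γ`. -/
lemma exists_norm_reflectionFactor_le_strip : ∃ C > (0 : ℝ), ∀ w : ℂ,
    -(1 / 2) ≤ w.re → w.re ≤ 1 / 2 → 1 ≤ w.im → ‖reflectionFactor w‖ ≤ C := by
  obtain ⟨C, hC, h⟩ := exists_norm_Gamma_le
  have h2π : 1 ≤ 2 * Real.pi := by linarith [Real.pi_gt_three]
  refine ⟨2 * (2 * Real.pi) ^ (1 / 2 : ℝ) * C, by positivity, fun w h1 h2 h3 ↦ ?_⟩
  have hpow : ‖(2 * Real.pi : ℂ) ^ (-w)‖ ≤ (2 * Real.pi) ^ (1 / 2 : ℝ) := by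
    rw [show (2 * Real.pi : ℂ) = ((2 * Real.pi : ℝ) : ℂ) by push_cast; rfl,
      norm_cpow_eq_rpow_re_of_pos (by linarith)]
    exact Real.rpow_le_rpow_of_exponent_le h2π (by simp; linarith)
  have hcos : ‖cos (Real.pi * w / 2)‖ ≤ Real.exp (Real.pi * w.im / 2) := by
    refine (norm_cos_le_exp_abs_im _).trans_eq ?_
    have : (Real.pi * w / 2).im = Real.pi * w.im / 2 := by simp
    rw [this, abs_of_nonneg (by have := Real.pi_pos; positivity)]
  rw [reflectionFactor, norm_mul, norm_mul, norm_mul, norm_ofNat]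
  calc _ ≤ 2 * (2 * Real.pi) ^ (1 / 2 : ℝ) * (C * Real.exp (-(Real.pi * w.im / 2))) *
        Real.exp (Real.pi * w.im / 2) := by gcongr; exact h w h1 h2 h3
    _ = 2 * (2 * Real.pi) ^ (1 / 2 : ℝ) * C * (Real.exp (-(Real.pi * w.im / 2)) *
        Real.exp (Real.pi * w.im / 2)) := by ring
    _ = _ := by rw [← Real.exp_add]; simp

lemma exists_norm_reflectionFactor_le_rectangle (A : ℝ) : ∃ C : ℝ, ∀ w : ℂ,
    -(1 / 2) ≤ w.re → w.re ≤ 3 / 2 → 1 ≤ w.im → w.im ≤ A → ‖reflectionFactor w‖ ≤ C := by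
  have hK : IsCompact (Set.Icc (-(1 / 2) : ℝ) (3 / 2) ×ℂ Set.Icc 1 A) :=
    isCompact_Icc.reProdIm isCompact_Icc
  obtain ⟨C, hC⟩ := hK.exists_bound_of_continuousOn (f := reflectionFactor) (by
    intro w hw
    have him : 1 ≤ w.im := hw.2.1
    have hG : ContinuousAt Gamma w :=
      (differentiableAt_Gamma w fun n h ↦ by
        have : w.im = 0 := by simp [h]
        linarith).continuousAt
    have hpow : ContinuousAt (fun w : ℂ ↦ (2 * Real.pi : ℂ) ^ (-w)) w :=
      continuousAt_id.neg.const_cpow (.inl (by simp [Real.pi_ne_zero]))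
    unfold reflectionFactor
    exact (((continuousAt_const.mul hpow).mul hG).mul (by fun_prop)).continuousWithinAt)
  exact ⟨C, fun w h1 h2 h3 h4 ↦ hC w ⟨⟨h1, h2⟩, h3, h4⟩⟩

/-! ### The reflection bound -/

/-- Assuming RH: there is an absolute constant `C > 0` such that for every
`α ∈ ℂ` with `|α| ≤ 1` and `|Re α − 1/2| ≤ (log T)⁻¹`, and every non-trivial
zero `ρ` of `ζ` with `0 < γ ≤ T`, one has `|ζ(ρ+α)| ≤ C |ζ(ρ−\bar α)|`. -/
theorem zeta_shift_reflection_bound (hRH : RiemannHypothesis) :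
    ∃ C > (0 : ℝ), ∀ (T : ℝ) (α ρ : ℂ),
      ‖α‖ ≤ 1 → |α.re - 1 / 2| ≤ (Real.log T)⁻¹ →
      riemannZeta ρ = 0 → 0 < ρ.re → ρ.re < 1 → 0 < ρ.im → ρ.im ≤ T →
      ‖riemannZeta (ρ + α)‖ ≤ C * ‖riemannZeta (ρ - (starRingEnd ℂ) α)‖ := by
  obtain ⟨C₁, hC₁, hstrip⟩ := exists_norm_reflectionFactor_le_strip
  obtain ⟨C₂, hrect⟩ := exists_norm_reflectionFactor_le_rectangle (Real.exp 2 + 1)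
  refine ⟨max C₁ C₂, lt_max_of_lt_left hC₁, fun T α ρ hα hT hζ hρ0 hρ1 him himT ↦ ?_⟩
  have hre : ρ.re = 1 / 2 := by
    refine hRH ρ hζ ?_ (by rintro rfl; norm_num at hρ1)
    rintro ⟨n, rfl⟩
    simp at him
  have h2 := two_lt_im_of_riemannZeta_eq_zero hre him hζ
  set w := ρ - (starRingEnd ℂ) α with hw
  have hwre : w.re = 1 / 2 - α.re := by simp [hw, hre]
  have hwim : w.im = ρ.im + α.im := by simp [hw]
  have hαre := abs_le.mp ((abs_re_le_norm α).trans hα)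
  have hαim := abs_le.mp ((abs_im_le_norm α).trans hα)
  have hconj : ρ + α = (starRingEnd ℂ) (1 - w) := by
    apply Complex.ext
    · simp [hwre, hre]; ring
    · simp [hwim]
  rw [hconj, riemannZeta_conj, norm_conj, riemannZeta_one_sub_eq (by linarith), norm_mul]
  gcongr
  -- Once `log T > 2`, the hypothesis forces `0 ≤ Re α`, that is `Re w ≤ 1/2`; for smaller `T` the
  -- point `w` stays in a fixed rectangle.
  rcases le_or_gt T (Real.exp 2) with hT2 | hT2
  · exact (hrect w (by linarith) (by linarith) (by linarith) (by linarith)).trans (le_max_right _ _)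
  · have hlog : 2 < Real.log T := (Real.lt_log_iff_exp_lt (by linarith)).mpr hT2
    have hinv : (Real.log T)⁻¹ ≤ 1 / 2 := by
      rw [one_div]; gcongr
    have := (abs_le.mp (hT.trans hinv)).1
    exact (hstrip w (by linarith) (by linarith) (by linarith)).trans (le_max_left _ _)
end

section
/- Assume the Riemann Hypothesis and write τ = |t| + 3. Then the bound |(ζ'/ζ)(σ + it)| ≪ (log τ)^{2 − 2σ} holds uniformly for 5/8 ≤ σ ≤ 7/8. -/
open Complex

/-!
Write `F = ζ'/ζ` and `P(z) = ∑_{n ≤ N} Λ(n) n^{-z}`, and let `ζ₁(z) = (z - 1) ζ(z)`, an entire function.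
The plan is to show that `F + P` is small inside the strip by interpolating between the line
`Re z = 3/2`, where `F + P` is a tail `O(N^{-1/2})` of the Dirichlet series of `F` by Chebyshev's bound,
and the critical line, where on RH only one-sided information on `F` survives.

Near the critical line the information is: `Re (ζ₁'/ζ₁) ≥ -C log τ`. Indeed each zero `ρ` contributes
`1/(z - ρ)`, which has positive real part to the right of the line
(`logDeriv_bounds_of_zeros_left`, `exists_logDeriv_riemannZeta₁_bounds`). Hence
`G = ζ₁'/ζ₁ + 2A` has positive real part, where `A` is a holomorphic stand-in for `C (log τ + L)`
with bounded imaginary part (`logMajorant`). It follows that `|ζ₁'/ζ₁| ≤ 11 |G|` and `|G| ≥ L`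
(`denominator_bounds`). With `N` about `L²`, where `L = log (|T| + 3)` for a fixed height `T`, also
`P = O(N^{1/2}) = O(L) = O(|G|)`. So the quotient of `F + P` by `G` (with a factor `(z - 1)/(z + 1)` removing
the pole at `1`) is `O(1)` for `1/2 < Re z ≤ 3/2` and `O(N^{-1})` on `Re z = 3/2`, and the three lines theorem
makes it `O(N^{1/2 - σ})` at `σ + iT` (`norm_stripQuotient_interp`).

At `z = σ + iT` with `5/8 ≤ σ ≤ 7/8` one has `G = O(L)` and `P = O(N^{1-σ})`, so
`F = O(N^{1-σ} + L N^{1/2-σ}) = O(L^{2-2σ})`.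
-/

/-! ### The logarithmic derivative of a function with zeros in a half-plane -/

/-- A zero-free `f` with `‖f‖ ≤ ‖f 0‖ exp K` has `f = f 0 * exp g` where `Re g ≤ K`, `g 0 = 0`.
Borel–Carathéodory then bounds `g`, and Cauchy's estimate bounds `g' = f'/f`. -/
theorem norm_logDeriv_le_of_zero_free {f : ℂ → ℂ} (hf : Differentiable ℂ f) {M K : ℝ}
    (hK : 0 < K) (hM : ∀ z ∈ Metric.ball (0 : ℂ) (13 / 8), ‖f z‖ ≤ M)
    (hne : ∀ z ∈ Metric.ball (0 : ℂ) (13 / 8), f z ≠ 0) (h0 : M ≤ ‖f 0‖ * Real.exp K)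
    {z : ℂ} (hz : ‖z‖ ≤ 3 / 2) : ‖logDeriv f z‖ ≤ 800 * K := by
  have h0mem : (0 : ℂ) ∈ Metric.ball (0 : ℂ) (13 / 8) := by simp
  have hd : DifferentiableOn ℂ (logDeriv f) (Metric.ball 0 (13 / 8)) := by
    intro w hw
    have h1 : DifferentiableAt ℂ (deriv f) w := hf.deriv.differentiableAt
    exact (h1.div hf.differentiableAt (hne w hw)).differentiableWithinAt
  -- `g` is the primitive of `f' / f` that vanishes at the origin.
  obtain ⟨g, hg0, hg⟩ := hd.isExactOn_ball.with_val_at (y := (0 : ℂ)) 0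
  have hgd : DifferentiableOn ℂ g (Metric.ball 0 (13 / 8)) := fun w hw =>
    (hg w hw).differentiableAt.differentiableWithinAt
  have hconst : ∀ w ∈ Metric.ball (0 : ℂ) (13 / 8), f w * exp (-g w) = f 0 := by
    intro w hw
    have hder : ∀ x ∈ Metric.ball (0 : ℂ) (13 / 8),
        HasDerivAt (fun y => f y * exp (-g y)) 0 x := by
      intro x hx
      have h1 : HasDerivAt (fun y => f y * exp (-g y))
          (deriv f x * exp (-g x) + f x * (exp (-g x) * -logDeriv f x)) x :=
        (hf x).hasDerivAt.mul (hg x hx).neg.cexp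
      refine h1.congr_deriv ?_
      rw [logDeriv_apply]
      field_simp [hne x hx]
      ring
    have := (convex_ball (0 : ℂ) (13 / 8)).is_const_of_fderivWithin_eq_zero (𝕜 := ℂ)
      (f := fun y => f y * exp (-g y))
      (fun x hx => (hder x hx).differentiableAt.differentiableWithinAt)
      (fun x hx => by
        rw [fderivWithin_of_isOpen Metric.isOpen_ball hx]
        ext; simp [(hder x hx).deriv]) hw h0mem
    simpa [hg0] using this
  have hre : Set.MapsTo g (Metric.ball 0 (13 / 8)) {w | w.re ≤ K} := by
    intro w hw
    have h1 := congrArg norm (hconst w hw)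
    rw [norm_mul, norm_exp, neg_re] at h1
    have h2 := hM w hw
    have hp : 0 < ‖f 0‖ := norm_pos_iff.2 (hne 0 h0mem)
    have h3 : ‖f w‖ = ‖f 0‖ * Real.exp (g w).re := by
      rw [← h1, mul_assoc, ← Real.exp_add]; simp
    have h4 : ‖f 0‖ * Real.exp (g w).re ≤ ‖f 0‖ * Real.exp K := by linarith
    exact Real.exp_le_exp.1 (le_of_mul_le_mul_left h4 hp)
  have hbound : ∀ w, ‖w‖ ≤ 25 / 16 → ‖g w‖ ≤ 50 * K := by
    intro w hw
    have h1 := borelCaratheodory_zero hK hgd hre (by norm_num : (0 : ℝ) < 13 / 8)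
      (z := w) (by simp; linarith) hg0
    refine h1.trans ?_
    rw [div_le_iff₀ (by linarith)]
    nlinarith [norm_nonneg w]
  -- The disc of radius `1/16` about `z` stays inside `‖w‖ ≤ 25/16 < 13/8`.
  have hmem : ∀ w ∈ Metric.closedBall z (1 / 16), ‖w‖ ≤ 25 / 16 := by
    intro w hw
    have h1 := norm_le_norm_add_norm_sub' w z
    rw [mem_closedBall_iff_norm] at hw
    linarith
  have hz' : z ∈ Metric.ball (0 : ℂ) (13 / 8) := by simp; linarith
  rw [← (hg z hz').deriv]
  have h1 := norm_deriv_le_of_forall_mem_sphere_norm_le (f := g) (c := z) (R := 1 / 16)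
    (C := 50 * K) (by norm_num) ?_ ?_
  · refine h1.trans (le_of_eq (by ring))
  · apply DifferentiableOn.diffContOnCl
    rw [closure_ball _ (by norm_num)]
    exact hgd.mono fun w hw => by
      have := hmem w hw
      simp; linarith
  · intro w hw
    exact hbound w (hmem w (Metric.sphere_subset_closedBall hw))

/-- Dividing out one zero `ρ` by the Blaschke factor of the disc of radius `7/4`. The quotient `g` keeps
the bound `M` (maximum principle), while its value at the centre grows by a factor at least
`(7/4)/(13/8) = 14/13`; so this can be done only `O(log (M / ‖f 0‖))` times. -/
theorem exists_blaschke_quotient {f : ℂ → ℂ} (hf : Differentiable ℂ f) {M : ℝ}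
    (hM : ∀ w, ‖w‖ ≤ 7 / 4 → ‖f w‖ ≤ M) {ρ : ℂ} (hρ : ‖ρ‖ < 13 / 8) (hfρ : f ρ = 0) :
    ∃ g : ℂ → ℂ, Differentiable ℂ g ∧ (∀ w, ‖w‖ ≤ 7 / 4 → ‖g w‖ ≤ M) ∧
      ‖f 0‖ * (14 / 13) ≤ ‖g 0‖ ∧ (∀ w, ‖w‖ < 13 / 8 → g w = 0 → f w = 0) ∧
      ∀ z, ‖z‖ ≤ 3 / 2 → f z ≠ 0 →
        ∃ e : ℂ, ‖e‖ ≤ 3 ∧ logDeriv f z = 1 / (z - ρ) + logDeriv g z + e := by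
  set d : ℂ → ℂ := dslope f ρ with hd
  have hdd : Differentiable ℂ d := by
    rw [← differentiableOn_univ] at hf ⊢
    exact (differentiableOn_dslope Filter.univ_mem).2 hf
  have hfd : ∀ w, f w = (w - ρ) * d w := by
    intro w
    have := sub_smul_dslope f ρ w
    rw [hfρ, sub_zero] at this
    rw [← this, smul_eq_mul]
  set c : ℂ := (starRingEnd ℂ) ρ with hc
  have hcn : ‖c‖ = ‖ρ‖ := by simp [hc]
  set q : ℂ → ℂ := fun w => (49 / 16 - c * w) / (7 / 4) with hq
  have hqd : Differentiable ℂ q := by fun_prop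
  have hlin : ∀ w, ‖w‖ < 7 / 4 → (49 / 16 : ℂ) - c * w ≠ 0 := by
    intro w hw h
    have h1 : (49 / 16 : ℂ) = c * w := sub_eq_zero.1 h
    have h2 := congrArg norm h1
    rw [norm_mul, hcn] at h2
    norm_num at h2
    nlinarith [norm_nonneg w, norm_nonneg ρ]
  refine ⟨fun w => d w * q w, hdd.mul hqd, ?_, ?_, ?_, ?_⟩
  · intro w hw
    refine norm_le_of_forall_mem_frontier_norm_le (U := Metric.ball (0 : ℂ) (7 / 4))
      Metric.isBounded_ball (hdd.mul hqd).diffContOnCl ?_ ?_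
    · intro v hv
      rw [frontier_ball _ (by norm_num), mem_sphere_zero_iff_norm] at hv
      -- On the circle `‖v‖ = 7/4` the factor `q v` has the modulus of `v - ρ`.
      have h1 : (49 / 16 : ℂ) - c * v = v * (starRingEnd ℂ) (v - ρ) := by
        rw [map_sub, mul_sub, mul_conj, normSq_eq_norm_sq, hv, hc]
        push_cast
        ring
      have h2 : ‖q v‖ = ‖v - ρ‖ := by
        simp only [hq]
        rw [h1, norm_div, norm_mul, RCLike.norm_conj, hv]
        norm_num
      change ‖d v * q v‖ ≤ M
      rw [norm_mul, h2, mul_comm, ← norm_mul, ← hfd]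
      exact hM v hv.le
    · rw [closure_ball _ (by norm_num)]
      simpa using hw
  · have h1 : ‖q 0‖ = 7 / 4 := by simp [hq]; norm_num
    change _ ≤ ‖d 0 * q 0‖
    rw [hfd 0, norm_mul, norm_mul, h1, zero_sub, norm_neg]
    nlinarith [norm_nonneg (d 0), norm_nonneg ρ]
  · intro w hw h
    rcases mul_eq_zero.1 h with h | h
    · rw [hfd, h, mul_zero]
    · exact absurd h (div_ne_zero (hlin w (by linarith)) (by norm_num))
  · intro z hz hfz
    have hz1 : z - ρ ≠ 0 := fun h => hfz (by rw [hfd, h, zero_mul])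
    have hz2 : d z ≠ 0 := fun h => hfz (by rw [hfd, h, mul_zero])
    have hz3 := hlin z (by linarith)
    have hz4 : q z ≠ 0 := div_ne_zero hz3 (by norm_num)
    refine ⟨c / (49 / 16 - c * z), ?_, ?_⟩
    · rw [norm_div, hcn]
      have h1 : (5 / 8 : ℝ) ≤ ‖(49 / 16 : ℂ) - c * z‖ := by
        have h2 := norm_sub_norm_le (49 / 16 : ℂ) (c * z)
        rw [norm_mul, hcn] at h2
        norm_num at h2
        nlinarith [norm_nonneg z, norm_nonneg ρ]
      rw [div_le_iff₀ (by linarith)]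
      linarith
    · have h1 : logDeriv f z = 1 / (z - ρ) + logDeriv d z := by
        have : f = fun w => (w - ρ) * d w := funext hfd
        rw [this, logDeriv_mul z hz1 hz2 (by fun_prop) (hdd z)]
        simp [logDeriv_apply]
      have h2 : logDeriv q z = - (c / (49 / 16 - c * z)) := by
        have h3 : HasDerivAt q (-c / (7 / 4)) z := by
          have := (((hasDerivAt_id z).const_mul c).const_sub (49 / 16)).div_const (7 / 4)
          simpa using this
        rw [logDeriv_apply, h3.deriv]
        simp only [hq]
        field_simp
      rw [h1, logDeriv_mul z hz2 hz4 (hdd z) (hqd z), h2]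
      ring

/-- Local bounds for `f'/f` when all zeros of `f` near the origin lie to the left of `Re w = b`: each zero
`ρ` contributes `1/(z - ρ)`, of nonnegative real part and of modulus at most `1/(z.re - b)`. The
exponent `n` controls both the growth of `f` and the number of its zeros, and the proof divides out
the zeros one at a time by induction on `n`. -/
theorem logDeriv_bounds_of_zeros_left {b : ℝ} {z : ℂ} (hz : ‖z‖ ≤ 3 / 2) (hb : b < z.re)
    {M : ℝ} (hM0 : 0 < M) (n : ℕ) : ∀ f : ℂ → ℂ, Differentiable ℂ f →
      (∀ w, ‖w‖ ≤ 7 / 4 → ‖f w‖ ≤ M) → M ≤ ‖f 0‖ * (14 / 13) ^ n →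
      (∀ w, ‖w‖ < 13 / 8 → f w = 0 → w.re ≤ b) →
      -(800 * (n + 1)) ≤ (logDeriv f z).re ∧
        ‖logDeriv f z‖ ≤ 800 * (n + 1) * (1 + 1 / (z.re - b)) := by
  have hd : 0 < 1 / (z.re - b) := by
    have := sub_pos.2 hb
    positivity
  induction n with
  | zero =>
    intro f hf hM h0 hzero
    have hne : ∀ w ∈ Metric.ball (0 : ℂ) (13 / 8), f w ≠ 0 := by
      intro ρ hρ hfρ
      obtain ⟨g, hg, hgM, hg0, -⟩ := exists_blaschke_quotient hf hM
        (by simpa using hρ) hfρ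
      have := hgM 0 (by norm_num)
      -- With `n = 0` the maximum is already attained at the centre, which leaves no room for a zero.
      norm_num at h0
      linarith
    have h1 := norm_logDeriv_le_of_zero_free hf one_pos
      (fun w hw => hM w (by simp at hw; linarith)) hne
      (h0.trans (by gcongr; simp)) hz
    have h2 := abs_le.1 (abs_re_le_norm (logDeriv f z))
    push_cast
    constructor <;> nlinarith
  | succ n ih =>
    intro f hf hM h0 hzero
    by_cases hne : ∀ w ∈ Metric.ball (0 : ℂ) (13 / 8), f w ≠ 0
    · have hexp : (14 / 13 : ℝ) ^ (n + 1) ≤ Real.exp (n + 1 + 1) := by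
        have h1 : (14 / 13 : ℝ) ≤ Real.exp 1 := by
          have := Real.add_one_le_exp 1
          linarith
        calc (14 / 13 : ℝ) ^ (n + 1) ≤ Real.exp 1 ^ (n + 1) := by gcongr
          _ = Real.exp (n + 1) := by rw [← Real.exp_nat_mul]; push_cast; ring_nf
          _ ≤ _ := Real.exp_le_exp.2 (by linarith)
      have h1 := norm_logDeriv_le_of_zero_free hf (by positivity : (0 : ℝ) < n + 1 + 1)
        (fun w hw => hM w (by simp at hw; linarith)) hne
        (h0.trans (by gcongr)) hz
      have h2 := abs_le.1 (abs_re_le_norm (logDeriv f z))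
      push_cast
      constructor
      · linarith
      · refine h1.trans (le_mul_of_one_le_right (by positivity) (by linarith))
    · push Not at hne
      obtain ⟨ρ, hρ, hfρ⟩ := hne
      have hρ' : ‖ρ‖ < 13 / 8 := by simpa using hρ
      obtain ⟨g, hg, hgM, hg0, hgz, hlog⟩ := exists_blaschke_quotient hf hM hρ' hfρ
      have hfz : f z ≠ 0 := fun h => absurd (hzero z (by linarith) h) (not_le.2 hb)
      obtain ⟨e, he, hfe⟩ := hlog z hz hfz
      obtain ⟨ih1, ih2⟩ := ih g hg hgM
        (h0.trans (by rw [pow_succ', ← mul_assoc]; gcongr))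
        (fun w hw h => hzero w hw (hgz w hw h))
      have hρb : ρ.re ≤ b := hzero ρ hρ' hfρ
      have hre : 0 ≤ (1 / (z - ρ)).re := by
        rw [one_div, inv_re]
        exact div_nonneg (by simp; linarith) (normSq_nonneg _)
      have hnorm : ‖1 / (z - ρ)‖ ≤ 1 / (z.re - b) := by
        rw [norm_div, norm_one]
        have h3 := re_le_norm (z - ρ)
        rw [sub_re] at h3
        exact one_div_le_one_div_of_le (sub_pos.2 hb) (by linarith)
      have h4 := abs_le.1 (abs_re_le_norm e)
      rw [hfe]
      push_cast
      constructor
      · simp only [add_re]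
        linarith
      · refine (norm_add₃_le).trans ?_
        nlinarith

/-! ### Growth of `(s - 1) ζ(s)` -/

theorem norm_cpow_neg_sub_le {s : ℂ} (hs : 0 < s.re) {m x : ℝ} (hm : 1 ≤ m) (hx : m ≤ x)
    (hx1 : x ≤ m + 1) :
    ‖(x : ℂ) ^ (-s) - (m : ℂ) ^ (-s)‖ ≤ ‖s‖ * m ^ (-s.re - 1) := by
  have hs0 : -s ≠ 0 := by
    intro h
    rw [neg_eq_zero] at h
    simp [h] at hs
  have key := norm_image_sub_le_of_norm_deriv_le_segment'
    (f := fun y : ℝ => (y : ℂ) ^ (-s)) (f' := fun y : ℝ => (-s) * (y : ℂ) ^ (-s - 1))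
    (a := m) (b := m + 1) (C := ‖s‖ * m ^ (-s.re - 1))
    (fun y hy => (hasDerivAt_ofReal_cpow_const (by linarith [hy.1] : y ≠ 0) hs0).hasDerivWithinAt)
    (fun y hy => by
      have hy0 : 0 < y := by linarith [hy.1]
      rw [norm_mul, norm_neg, norm_cpow_eq_rpow_re_of_pos hy0]
      have : (-s - 1).re = -s.re - 1 := by simp
      rw [this]
      gcongr ?_ * ?_
      exact Real.rpow_le_rpow_of_nonpos (by linarith) hy.1 (by linarith)) x ⟨hx, hx1⟩
  refine key.trans ?_
  have h0 : 0 ≤ ‖s‖ * m ^ (-s.re - 1) := by positivity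
  nlinarith

/-- The term `(s - 1) m^{-s} + (m + 1)^{1-s} - m^{1-s}`, `m = n + 1`, of the series representing
`(s - 1) ζ(s) - 1`; it is `(s - 1)` times the error in replacing `∫ x^{-s} dx` over `[m, m + 1]` by `m^{-s}`. -/
noncomputable def zetaTerm (n : ℕ) (s : ℂ) : ℂ :=
  (s - 1) * (n + 1 : ℂ) ^ (-s) + (n + 2 : ℂ) ^ (1 - s) - (n + 1 : ℂ) ^ (1 - s)

theorem norm_zetaTerm_le (n : ℕ) {s : ℂ} (hs : 0 < s.re) :
    ‖zetaTerm n s‖ ≤ ‖s - 1‖ * ‖s‖ * ((n : ℝ) + 1) ^ (-s.re - 1) := by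
  rcases eq_or_ne s 1 with rfl | hs1
  · simp [zetaTerm]
  set m : ℝ := (n : ℝ) + 1 with hm
  have hm1 : 1 ≤ m := by simp [hm]
  have hs0 : 1 - s ≠ 0 := sub_ne_zero.mpr hs1.symm
  -- `zetaTerm n s` is the increment over `[m, m + 1]` of `(s - 1) m^{-s} (y - m) + y^{1-s}`, whose
  -- derivative is `(s - 1) (m^{-s} - y^{-s})`.
  have key := norm_image_sub_le_of_norm_deriv_le_segment'
    (f := fun y : ℝ => (s - 1) * (m : ℂ) ^ (-s) * ((y : ℂ) - m) + (y : ℂ) ^ (1 - s))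
    (f' := fun y : ℝ => (s - 1) * (m : ℂ) ^ (-s) * 1 + (1 - s) * (y : ℂ) ^ (1 - s - 1))
    (a := m) (b := m + 1) (C := ‖s - 1‖ * ‖s‖ * m ^ (-s.re - 1))
    (fun y hy => by
      have h1 := hasDerivAt_ofReal_cpow_const (by linarith [hy.1] : y ≠ 0) hs0
      have h2 : HasDerivAt (fun y : ℝ => ((y : ℂ) - m)) 1 y :=
        (Complex.ofRealCLM.hasDerivAt (x := y)).sub_const _ 
      exact ((h2.const_mul _).add h1).hasDerivWithinAt)
    (fun y hy => by
      have e : (s - 1) * (m : ℂ) ^ (-s) * 1 + (1 - s) * (y : ℂ) ^ (1 - s - 1)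
          = -((s - 1) * ((y : ℂ) ^ (-s) - (m : ℂ) ^ (-s))) := by
        rw [show 1 - s - 1 = -s by ring]; ring
      rw [e, norm_neg, norm_mul, mul_assoc]
      gcongr
      exact norm_cpow_neg_sub_le hs hm1 hy.1 hy.2.le) (m + 1) ⟨by linarith, le_rfl⟩
  have e : zetaTerm n s = ((s - 1) * (m : ℂ) ^ (-s) * (((m + 1 : ℝ) : ℂ) - m)
      + ((m + 1 : ℝ) : ℂ) ^ (1 - s))
      - ((s - 1) * (m : ℂ) ^ (-s) * ((m : ℂ) - m) + (m : ℂ) ^ (1 - s)) := by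
    simp only [zetaTerm, hm]
    push_cast
    rw [show (n : ℂ) + 1 + 1 = n + 2 by ring]
    ring
  rw [e]
  refine key.trans (by simp)

theorem differentiable_zetaTerm (n : ℕ) : Differentiable ℂ (zetaTerm n) := by
  have h1 : (n + 1 : ℂ) ≠ 0 := by exact_mod_cast Nat.succ_ne_zero n
  have h2 : (n + 2 : ℂ) ≠ 0 := by exact_mod_cast (by omega : n + 2 ≠ 0)
  unfold zetaTerm
  intro s
  refine DifferentiableAt.sub (DifferentiableAt.add (DifferentiableAt.mul (by fun_prop) ?_) ?_) ?_
  · exact DifferentiableAt.const_cpow (by fun_prop) (Or.inl h1)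
  · exact DifferentiableAt.const_cpow (by fun_prop) (Or.inl h2)
  · exact DifferentiableAt.const_cpow (by fun_prop) (Or.inl h1)

theorem summable_rpow_aux {a : ℝ} (ha : a < -1) :
    Summable fun n : ℕ => ((n : ℝ) + 1) ^ a := by
  have := (summable_nat_add_iff 1).mpr (Real.summable_nat_rpow.mpr ha)
  simpa using this

theorem hasSum_zetaTerm {s : ℂ} (hs : 1 < s.re) :
    HasSum (fun n => zetaTerm n s) (riemannZeta₁ s - 1) := by
  have hs1 : s ≠ 1 := by rintro rfl; simp at hs
  have hz : riemannZeta₁ s = (s - 1) * riemannZeta s := by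
    rw [riemannZeta_eq_inv_sub_mul hs1, mul_inv_cancel_left₀ (sub_ne_zero.mpr hs1)]
  have hsum : Summable fun n : ℕ => (n + 1 : ℂ) ^ (-s) := by
    refine Summable.of_norm ?_
    refine (summable_rpow_aux (a := -s.re) (by linarith)).congr fun n => ?_
    have := norm_cpow_eq_rpow_re_of_pos (x := (n : ℝ) + 1) (by positivity) (-s)
    push_cast at this
    simp [this]
  have h1 : HasSum (fun n : ℕ => (n + 1 : ℂ) ^ (-s)) (riemannZeta s) := by
    rw [zeta_eq_tsum_one_div_nat_add_one_cpow hs]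
    convert hsum.hasSum using 4 with n
    rw [cpow_neg, one_div]
  have hall : Summable fun n => zetaTerm n s := by
    refine Summable.of_norm_bounded (g := fun n : ℕ => ‖s - 1‖ * ‖s‖ * ((n : ℝ) + 1) ^ (-s.re - 1))
      ((summable_rpow_aux (by linarith)).mul_left _) fun n => norm_zetaTerm_le n (by linarith)
  have h2 : Filter.Tendsto (fun N : ℕ => ∑ n ∈ Finset.range N, zetaTerm n s) Filter.atTop
      (nhds ((s - 1) * riemannZeta s + (0 - 1))) := by
    have e : ∀ N : ℕ, ∑ n ∈ Finset.range N, zetaTerm n s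
        = (s - 1) * ∑ n ∈ Finset.range N, (n + 1 : ℂ) ^ (-s) + ((N + 1 : ℂ) ^ (1 - s) - 1) := by
      intro N
      induction N with
      | zero => simp
      | succ N ih =>
        rw [Finset.sum_range_succ, ih, Finset.sum_range_succ, zetaTerm]
        push_cast
        rw [show (N : ℂ) + 1 + 1 = N + 2 by ring]
        ring
    simp_rw [e]
    refine (h1.tendsto_sum_nat.const_mul _).add (Filter.Tendsto.sub_const ?_ _)
    rw [tendsto_zero_iff_norm_tendsto_zero]
    have : ∀ N : ℕ, ‖(N + 1 : ℂ) ^ (1 - s)‖ = ((N + 1 : ℕ) : ℝ) ^ (-(s.re - 1)) := by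
      intro N
      have := norm_cpow_eq_rpow_re_of_pos (x := (N : ℝ) + 1) (by positivity) (1 - s)
      push_cast at this ⊢
      simp [this]
    simp_rw [this]
    exact ((tendsto_rpow_neg_atTop (by linarith : 0 < s.re - 1)).comp
      tendsto_natCast_atTop_atTop).comp (Filter.tendsto_add_atTop_nat 1)
  have := tendsto_nhds_unique hall.hasSum.tendsto_sum_nat h2
  rw [hz]
  convert hall.hasSum using 1
  rw [this]; ring

/-- The series for `(s - 1) ζ(s)` converges locally uniformly to the left of `Re s = 1` as well, so the
representation extends there by the identity theorem. Any abscissa between `0` and `1/4` would do. -/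
theorem riemannZeta₁_eq {s : ℂ} (hs : 1 / 8 < s.re) :
    riemannZeta₁ s = 1 + ∑' n, zetaTerm n s := by
  -- Cutting the half-plane with a ball makes the bound on `zetaTerm` uniform.
  set B : ℝ := ‖s‖ + 3 with hB
  set U : Set ℂ := {w | 1 / 8 < w.re} ∩ Metric.ball 0 B with hU
  have hUo : IsOpen U := (isOpen_lt continuous_const Complex.continuous_re).inter Metric.isOpen_ball
  have hUc : IsPreconnected U :=
    ((convex_halfSpace_re_gt _).inter (convex_ball _ _)).isPreconnected
  have hd : DifferentiableOn ℂ (fun w => 1 + ∑' n, zetaTerm n w) U := by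
    refine (differentiableOn_const _).add ?_
    refine differentiableOn_tsum_of_summable_norm
      (u := fun n : ℕ => (B + 1) * B * ((n : ℝ) + 1) ^ (-(1 / 8 : ℝ) - 1))
      ((summable_rpow_aux (by norm_num)).mul_left _)
      (fun n => (differentiable_zetaTerm n).differentiableOn) hUo ?_
    rintro n w ⟨hw, hwB⟩
    have hw : 1 / 8 < w.re := hw
    have hwB : ‖w‖ < B := by simpa using hwB
    refine (norm_zetaTerm_le n (by linarith)).trans ?_
    have : ‖w - 1‖ ≤ B + 1 := (norm_sub_le _ _).trans (by simp; linarith)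
    gcongr; linarith
  have h1 := (hd.analyticOnNhd hUo)
  have h2 : AnalyticOnNhd ℂ riemannZeta₁ U :=
    (differentiable_riemannZeta₁.differentiableOn).analyticOnNhd hUo
  have h2U : (2 : ℂ) ∈ U := by
    refine ⟨?_, ?_⟩
    · change (1 / 8 : ℝ) < (2 : ℂ).re
      norm_num
    · have := norm_nonneg s
      simp [hB]; linarith
  have := h2.eqOn_of_preconnected_of_eventuallyEq h1 hUc h2U (by
    have : {w : ℂ | 1 < w.re} ∈ nhds (2 : ℂ) :=
      (isOpen_lt continuous_const Complex.continuous_re).mem_nhds (by simp)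
    filter_upwards [this] with w hw
    rw [(hasSum_zetaTerm hw).tsum_eq]; ring)
  exact this ⟨hs, by simp [hB]⟩

theorem exists_norm_riemannZeta₁_le : ∃ C : ℝ, 1 ≤ C ∧ ∀ s : ℂ, 1 / 4 ≤ s.re →
    ‖riemannZeta₁ s‖ ≤ C * (‖s‖ + 1) ^ 2 := by
  set S : ℝ := ∑' n : ℕ, ((n : ℝ) + 1) ^ (-(5 / 4) : ℝ) with hS
  have hsum := summable_rpow_aux (a := -(5 / 4)) (by norm_num)
  have hS0 : 0 ≤ S := tsum_nonneg fun n => by positivity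
  refine ⟨1 + S, by linarith, fun s hs => ?_⟩
  rw [riemannZeta₁_eq (by linarith)]
  have h1 : ‖∑' n, zetaTerm n s‖ ≤ ‖s - 1‖ * ‖s‖ * S := by
    rw [hS, ← tsum_mul_left]
    refine tsum_of_norm_bounded (hsum.mul_left _).hasSum fun n => ?_
    refine (norm_zetaTerm_le n (by linarith)).trans ?_
    gcongr
    · simp
    · linarith
  have h2 : ‖s - 1‖ ≤ ‖s‖ + 1 := (norm_sub_le _ _).trans (by simp)
  have h3 := norm_nonneg s
  have h4 : ‖s - 1‖ * ‖s‖ * S ≤ (‖s‖ + 1) * (‖s‖ + 1) * S := by gcongr; linarith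
  calc _ ≤ ‖(1 : ℂ)‖ + ‖∑' n, zetaTerm n s‖ := norm_add_le _ _
    _ ≤ 1 + (‖s‖ + 1) * (‖s‖ + 1) * S := by rw [norm_one]; linarith
    _ ≤ _ := by nlinarith

/-! ### The logarithmic derivative of `(s - 1) ζ(s)` under RH -/

theorem one_le_log_abs_add_three (t : ℝ) : 1 ≤ Real.log (|t| + 3) := by
  rw [Real.le_log_iff_exp_le (by positivity)]
  have := Real.exp_one_lt_d9
  have := abs_nonneg t
  linarith

theorem norm_riemannZeta_two_ge {s : ℂ} (hs : s.re = 2) : 1 / 3 ≤ ‖riemannZeta s‖ := by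
  have hn : ∀ n : ℕ, ‖1 / (n + 1 : ℂ) ^ s‖ = 1 / ((n : ℝ) + 1) ^ 2 := by
    intro n
    have := norm_cpow_eq_rpow_re_of_pos (x := (n : ℝ) + 1) (by positivity) s
    push_cast at this
    rw [norm_div, norm_one, this, hs]
    norm_cast
  have h2 : HasSum (fun n : ℕ => 1 / ((n : ℝ) + 1) ^ 2) (Real.pi ^ 2 / 6) := by
    have := (hasSum_nat_add_iff' 1).mpr hasSum_zeta_two
    simpa using this
  have h3 : HasSum (fun n : ℕ => 1 / (((n + 1 : ℕ) : ℝ) + 1) ^ 2) (Real.pi ^ 2 / 6 - 1) := by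
    have := (hasSum_nat_add_iff' 1).mpr h2
    simpa using this
  have hsm : Summable fun n : ℕ => 1 / (n + 1 : ℂ) ^ s :=
    Summable.of_norm (h2.summable.congr fun n => (hn n).symm)
  -- `‖ζ(s) - 1‖ ≤ ζ(2) - 1 = π² / 6 - 1 < 2 / 3`.
  rw [zeta_eq_tsum_one_div_nat_add_one_cpow (by linarith), hsm.tsum_eq_zero_add]
  have h4 : ‖∑' n : ℕ, 1 / (((n + 1 : ℕ) : ℂ) + 1) ^ s‖ ≤ Real.pi ^ 2 / 6 - 1 :=
    tsum_of_norm_bounded h3 fun n => (hn (n + 1)).le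
  have h5 : Real.pi ^ 2 / 6 - 1 ≤ 2 / 3 := by
    have := Real.pi_lt_d2
    have := Real.pi_pos
    nlinarith
  have h6 := norm_sub_le_norm_add (1 : ℂ) (∑' n : ℕ, 1 / (((n + 1 : ℕ) : ℂ) + 1) ^ s)
  simp only [Nat.cast_zero, zero_add, one_cpow, div_one]
  rw [norm_one] at h6
  linarith

theorem norm_riemannZeta₁_two_ge {s : ℂ} (hs : s.re = 2) : 1 / 3 ≤ ‖riemannZeta₁ s‖ := by
  have hs1 : s ≠ 1 := by rintro rfl; simp at hs
  have hz : riemannZeta₁ s = (s - 1) * riemannZeta s := by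
    rw [riemannZeta_eq_inv_sub_mul hs1, mul_inv_cancel_left₀ (sub_ne_zero.mpr hs1)]
  have h1 := norm_riemannZeta_two_ge hs
  have h2 : 1 ≤ ‖s - 1‖ := by
    have := Complex.re_le_norm (s - 1)
    simp [hs] at this
    linarith
  rw [hz, norm_mul]
  nlinarith

theorem riemannZeta₁_zero_re (hRH : RiemannHypothesis) {s : ℂ} (h0 : 0 < s.re)
    (hs : riemannZeta₁ s = 0) : s.re = 1 / 2 := by
  have hs1 : s ≠ 1 := by rintro rfl; simp at hs
  refine hRH s (by rw [riemannZeta_eq_inv_sub_mul hs1, hs, mul_zero]) ?_ hs1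
  rintro ⟨n, rfl⟩
  have : (-2 * ((n : ℂ) + 1)).re = -2 * ((n : ℝ) + 1) := by simp
  rw [this] at h0
  have : (0 : ℝ) ≤ n := n.cast_nonneg
  linarith

/-- On RH, to the right of the critical line the logarithmic derivative of `(s - 1) ζ(s)` is
`O(log τ / (Re z - 1/2))`, and, crucially, its real part is at least `-O(log τ)` with no loss near
the line. Both come from the disc around `2 + i Im z`, in which `log (M / |f(0)|) = O(log τ)`. -/
theorem exists_logDeriv_riemannZeta₁_bounds (hRH : RiemannHypothesis) :
    ∃ C : ℝ, 1 ≤ C ∧ ∀ z : ℂ, 1 / 2 < z.re → z.re ≤ 3 / 2 →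
      -(C * Real.log (|z.im| + 3)) ≤ (logDeriv riemannZeta₁ z).re ∧
      ‖logDeriv riemannZeta₁ z‖ ≤ C * Real.log (|z.im| + 3) * (1 + 1 / (z.re - 1 / 2)) := by
  obtain ⟨C, hC1, hC⟩ := exists_norm_riemannZeta₁_le
  have hlogC : 0 ≤ Real.log (12 * C) := Real.log_nonneg (by linarith)
  refine ⟨800 * (14 * Real.log (12 * C) + 30), by linarith, fun z hz1 hz2 => ?_⟩
  set τ := |z.im| + 3 with hτ
  have hτ3 : 3 ≤ τ := by simp [hτ]
  have hl1 : 1 ≤ Real.log τ := one_le_log_abs_add_three _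
  set c : ℂ := ⟨2, z.im⟩ with hc
  have hcn : ‖c‖ ≤ 2 + |z.im| := by
    have := Complex.norm_le_abs_re_add_abs_im c
    simpa [hc] using this
  set M : ℝ := C * (4 * τ ^ 2) with hM
  have hM0 : 0 < M := by positivity
  -- `log (14/13) ≥ 1/14`, so this `n` makes `(14/13)^n` at least `3 M`.
  set n : ℕ := ⌈14 * Real.log (3 * M)⌉₊ with hn
  have hlogM : Real.log (3 * M) = Real.log (12 * C) + 2 * Real.log τ := by
    rw [show 3 * M = (12 * C) * τ ^ 2 by rw [hM]; ring,
      Real.log_mul (by positivity) (by positivity), Real.log_pow]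
    norm_num
  have hn1 : (n : ℝ) + 1 ≤ (14 * Real.log (12 * C) + 30) * Real.log τ := by
    have := (Nat.ceil_lt_add_one (a := 14 * Real.log (3 * M)) (by rw [hlogM]; linarith)).le
    rw [← hn, hlogM] at this
    nlinarith
  have hMn : M ≤ 1 / 3 * (14 / 13) ^ n := by
    have h1 : Real.log (3 * M) ≤ n * Real.log (14 / 13) := by
      have h2 := Nat.le_ceil (14 * Real.log (3 * M))
      have h3 := Real.one_sub_inv_le_log_of_pos (x := 14 / 13) (by norm_num)
      norm_num at h3
      have h4 : (0 : ℝ) ≤ n := n.cast_nonneg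
      rw [← hn] at h2
      nlinarith
    rw [← Real.log_pow, Real.log_le_log_iff (by positivity) (by positivity)] at h1
    linarith
  have hf : Differentiable ℂ fun w => riemannZeta₁ (c + w) :=
    differentiable_riemannZeta₁.comp (by fun_prop)
  have hzc : ((z - c).re = z.re - 2) ∧ (z - c).im = 0 := by simp [hc]
  have hzn : ‖z - c‖ ≤ 3 / 2 := by
    have := Complex.norm_le_abs_re_add_abs_im (z - c)
    rw [hzc.1, hzc.2, abs_zero, add_zero] at this
    exact this.trans (abs_le.mpr ⟨by linarith, by linarith⟩)
  have key := logDeriv_bounds_of_zeros_left (b := -(3 / 2)) (z := z - c) hzn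
    (by rw [hzc.1]; linarith) hM0 n (fun w => riemannZeta₁ (c + w)) hf
    (fun w hw => by
      have hre : 1 / 4 ≤ (c + w).re := by
        have := (abs_le.mp (Complex.abs_re_le_norm w)).1
        simp [hc]; linarith
      refine (hC _ hre).trans ?_
      have : ‖c + w‖ + 1 ≤ 2 * τ := by
        have := norm_add_le c w
        have := abs_nonneg z.im
        linarith
      rw [hM, show 4 * τ ^ 2 = (2 * τ) ^ 2 by ring]
      gcongr)
    (by
      refine hMn.trans ?_
      gcongr
      exact norm_riemannZeta₁_two_ge (by simp [hc]))
    (fun w hw h0 => by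
      have hre : 0 < (c + w).re := by
        have := (abs_le.mp (Complex.abs_re_le_norm w)).1
        simp [hc]; linarith
      have := riemannZeta₁_zero_re hRH hre h0
      simp [hc] at this
      linarith)
  have hld : logDeriv (fun w => riemannZeta₁ (c + w)) (z - c) = logDeriv riemannZeta₁ z := by
    simp only [logDeriv_apply]
    rw [deriv_comp_const_add]
    simp
  rw [hld, hzc.1] at key
  have hd : z.re - 2 - -(3 / 2) = z.re - 1 / 2 := by ring
  rw [hd] at key
  have hp : 0 < z.re - 1 / 2 := by linarith
  refine ⟨by linarith [key.1], key.2.trans ?_⟩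
  have : 800 * ((n : ℝ) + 1) ≤ 800 * (14 * Real.log (12 * C) + 30) * Real.log τ := by linarith
  gcongr

/-! ### Dirichlet polynomials with von Mangoldt coefficients -/

section

open scoped ArithmeticFunction.vonMangoldt

theorem sum_vonMangoldt_le (N : ℕ) : ∑ n ∈ Finset.range N, Λ (n + 1) ≤ 6 * N := by
  have h := Chebyshev.psi_le_const_mul_self (x := N) (by positivity)
  have e : Chebyshev.psi N = ∑ n ∈ Finset.range N, Λ (n + 1) := by
    rw [Chebyshev.psi, Nat.floor_natCast, Finset.sum_bij (fun n _ => n - 1)]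
    · intro a ha; simp at ha ⊢; omega
    · intro a ha b hb; simp at ha hb ⊢; omega
    · intro b hb; exact ⟨b + 1, by simp at hb ⊢; omega, by simp⟩
    · intro a ha
      simp at ha
      rw [Nat.sub_add_cancel (by omega)]
  have h4 : Real.log 4 ≤ 2 := by
    rw [show (4 : ℝ) = 2 ^ 2 by norm_num, Real.log_pow]
    have := Real.log_two_lt_d9
    push_cast
    linarith
  rw [← e]
  nlinarith [(Nat.cast_nonneg N : (0 : ℝ) ≤ N)]

/-- Summation by parts: Chebyshev's bound lets one replace `Λ` by the constant `6` in sums against a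
nonnegative antitone weight. -/
theorem sum_vonMangoldt_mul_le {w : ℕ → ℝ} (hw : Antitone w) (hw0 : ∀ n, 0 ≤ w n) (N : ℕ) :
    ∑ n ∈ Finset.range N, Λ (n + 1) * w n ≤ 6 * ∑ n ∈ Finset.range N, w n := by
  have key : ∀ N : ℕ, ∑ n ∈ Finset.range N, Λ (n + 1) * w n ≤ 6 * ∑ n ∈ Finset.range N, w n
      - w N * (6 * N - ∑ n ∈ Finset.range N, Λ (n + 1)) := by
    intro N
    induction N with
    | zero => simp
    | succ N ih =>
      simp only [Finset.sum_range_succ]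
      have h1 := sum_vonMangoldt_le (N + 1)
      rw [Finset.sum_range_succ] at h1
      push_cast at h1 ⊢
      have h2 := mul_nonneg (sub_nonneg.mpr (hw (Nat.le_succ N))) (sub_nonneg.mpr h1)
      simp only [Nat.succ_eq_add_one] at h2
      linarith
  have h1 := mul_nonneg (hw0 N) (sub_nonneg.mpr (sum_vonMangoldt_le N))
  linarith [key N]

theorem sum_rpow_neg_le {σ : ℝ} (h0 : 0 ≤ σ) (h1 : σ < 1) (N : ℕ) :
    ∑ n ∈ Finset.range N, ((n : ℝ) + 1) ^ (-σ) ≤ (N : ℝ) ^ (1 - σ) / (1 - σ) := by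
  have hp : 0 < 1 - σ := by linarith
  rw [le_div_iff₀ hp]
  induction N with
  | zero => simp [Real.zero_rpow hp.ne']
  | succ N ih =>
    rw [Finset.sum_range_succ, add_mul]
    push_cast
    have hN : (0 : ℝ) < N + 1 := by positivity
    have hb := rpow_one_add_le_one_add_mul_self (s := -1 / ((N : ℝ) + 1))
      (by rw [le_div_iff₀ hN]; linarith [(Nat.cast_nonneg N : (0 : ℝ) ≤ N)]) hp.le (by linarith)
    have e1 : 1 + -1 / ((N : ℝ) + 1) = N / (N + 1) := by field_simp; ring
    rw [e1, Real.div_rpow (by positivity) hN.le, div_le_iff₀ (by positivity)] at hb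
    have e2 : ((N : ℝ) + 1) ^ (-σ) = ((N : ℝ) + 1) ^ (1 - σ) / (N + 1) := by
      rw [← Real.rpow_sub_one hN.ne']; congr 1; ring
    rw [e2]
    have e3 : (1 + (1 - σ) * (-1 / ((N : ℝ) + 1))) * ((N : ℝ) + 1) ^ (1 - σ)
        = ((N : ℝ) + 1) ^ (1 - σ) - ((N : ℝ) + 1) ^ (1 - σ) / (N + 1) * (1 - σ) := by ring
    linarith

theorem rpow_neg_three_halves_le {x : ℝ} (hx : 0 < x) :
    (x + 1) ^ (-(3 / 2) : ℝ) ≤ 2 * x ^ (-(1 / 2) : ℝ) - 2 * (x + 1) ^ (-(1 / 2) : ℝ) := by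
  have hx1 : 0 < x + 1 := by linarith
  have e1 : (x + 1) ^ (-(3 / 2) : ℝ) = (√(x + 1) ^ 3)⁻¹ := by
    rw [Real.rpow_neg hx1.le, Real.sqrt_eq_rpow, ← Real.rpow_natCast, ← Real.rpow_mul hx1.le]
    norm_num
  rw [e1, Real.rpow_neg hx1.le, Real.rpow_neg hx.le, ← Real.sqrt_eq_rpow, ← Real.sqrt_eq_rpow]
  set a := √x
  set b := √(x + 1)
  have ha : 0 < a := Real.sqrt_pos.mpr hx
  have hb : 0 < b := Real.sqrt_pos.mpr hx1
  have hab : a ≤ b := Real.sqrt_le_sqrt (by linarith)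
  have h1 : b ^ 2 - a ^ 2 = 1 := by
    rw [Real.sq_sqrt hx.le, Real.sq_sqrt hx1.le]; ring
  have e2 : 2 * a⁻¹ - 2 * b⁻¹ = 2 / (a * b * (a + b)) := by
    field_simp
    linear_combination h1
  rw [e2, inv_eq_one_div, div_le_div_iff₀ (by positivity) (by positivity)]
  have : a * b * (a + b) ≤ b * b * (b + b) := by gcongr
  nlinarith

/-- Chebyshev's bound for the tail `∑_{m > N} Λ(m) m^{-3/2}`. The weight is made constant on `m ≤ N` so
that the first `N` terms contribute only `O(N · N^{-3/2})`. -/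
theorem sum_vonMangoldt_tail_le {N : ℕ} (hN : 1 ≤ N) (K : ℕ) :
    ∑ n ∈ Finset.range K, Λ (N + n + 1) * ((N : ℝ) + n + 1) ^ (-(3 / 2) : ℝ)
      ≤ 18 * (N : ℝ) ^ (-(1 / 2) : ℝ) := by
  have hN0 : (0 : ℝ) < N := by exact_mod_cast hN
  set w : ℕ → ℝ := fun n => (max ((n : ℝ) + 1) N) ^ (-(3 / 2) : ℝ) with hw
  have hwpos : ∀ n, 0 ≤ w n := fun n => by positivity
  have hwa : Antitone w := by
    intro m n hmn
    refine Real.rpow_le_rpow_of_nonpos (by positivity) ?_ (by norm_num)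
    gcongr
  have key := sum_vonMangoldt_mul_le hwa hwpos (N + K)
  rw [Finset.sum_range_add, Finset.sum_range_add] at key
  have hw1 : ∀ n, w (N + n) = ((N : ℝ) + n + 1) ^ (-(3 / 2) : ℝ) := by
    intro n
    simp only [hw]
    rw [max_eq_left]
    · push_cast; rfl
    · push_cast; linarith [(Nat.cast_nonneg n : (0 : ℝ) ≤ n)]
  have hw2 : ∑ n ∈ Finset.range N, w n = (N : ℝ) ^ (-(1 / 2) : ℝ) := by
    have : ∀ n ∈ Finset.range N, w n = (N : ℝ) ^ (-(3 / 2) : ℝ) := by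
      intro n hn
      simp only [hw]
      rw [max_eq_right]
      exact_mod_cast Finset.mem_range.mp hn
    rw [Finset.sum_congr rfl this, Finset.sum_const, Finset.card_range, nsmul_eq_mul,
      mul_comm, ← Real.rpow_add_one hN0.ne']
    norm_num
  have hw3 : ∀ K : ℕ, ∑ n ∈ Finset.range K, ((N : ℝ) + n + 1) ^ (-(3 / 2) : ℝ) ≤
      2 * (N : ℝ) ^ (-(1 / 2) : ℝ) - 2 * ((N : ℝ) + K) ^ (-(1 / 2) : ℝ) := by
    intro K
    induction K with
    | zero => simp
    | succ K ih =>
      rw [Finset.sum_range_succ]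
      have := rpow_neg_three_halves_le (x := (N : ℝ) + K) (by positivity)
      push_cast
      rw [← add_assoc]
      linarith
  have hw4 : 0 ≤ ((N : ℝ) + K) ^ (-(1 / 2) : ℝ) := by positivity
  have h5 : 0 ≤ ∑ n ∈ Finset.range N, Λ (n + 1) * w n :=
    Finset.sum_nonneg fun n _ => mul_nonneg ArithmeticFunction.vonMangoldt_nonneg (hwpos n)
  simp only [hw1] at key
  rw [hw2] at key
  linarith [hw3 K]

/-- The Dirichlet polynomial `∑_{1 ≤ m ≤ N} Λ(m) m^{-z}`, indexed by `m = n + 1`. -/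
noncomputable def mangoldtPoly (N : ℕ) (z : ℂ) : ℂ :=
  ∑ n ∈ Finset.range N, (Λ (n + 1) : ℂ) * ((n : ℂ) + 1) ^ (-z)

theorem differentiable_mangoldtPoly (N : ℕ) : Differentiable ℂ (mangoldtPoly N) := by
  unfold mangoldtPoly
  refine Differentiable.fun_sum fun n _ => ?_
  have h1 : (n + 1 : ℂ) ≠ 0 := by exact_mod_cast Nat.succ_ne_zero n
  intro s
  exact (DifferentiableAt.const_cpow (by fun_prop) (Or.inl h1)).const_mul _

theorem norm_natCast_add_one_cpow (n : ℕ) (z : ℂ) :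
    ‖((n : ℂ) + 1) ^ z‖ = ((n : ℝ) + 1) ^ z.re := by
  have := norm_cpow_eq_rpow_re_of_pos (x := (n : ℝ) + 1) (by positivity) z
  push_cast at this
  exact this

theorem norm_mangoldtPoly_le {σ : ℝ} (h0 : 0 ≤ σ) (h1 : σ < 1) (N : ℕ) {z : ℂ} (hz : σ ≤ z.re) :
    ‖mangoldtPoly N z‖ ≤ 6 / (1 - σ) * (N : ℝ) ^ (1 - σ) := by
  have ha : Antitone fun n : ℕ => ((n : ℝ) + 1) ^ (-σ) := by
    intro m n hmn
    refine Real.rpow_le_rpow_of_nonpos (by positivity) ?_ (by linarith)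
    gcongr
  calc ‖mangoldtPoly N z‖ ≤ ∑ n ∈ Finset.range N, Λ (n + 1) * ((n : ℝ) + 1) ^ (-σ) := by
        refine norm_sum_le_of_le _ fun n _ => ?_
        rw [norm_mul, norm_natCast_add_one_cpow, Complex.norm_real,
          Real.norm_of_nonneg ArithmeticFunction.vonMangoldt_nonneg]
        refine mul_le_mul_of_nonneg_left ?_ ArithmeticFunction.vonMangoldt_nonneg
        exact Real.rpow_le_rpow_of_exponent_le (by simp) (by simpa using hz)
    _ ≤ 6 * ∑ n ∈ Finset.range N, ((n : ℝ) + 1) ^ (-σ) :=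
        sum_vonMangoldt_mul_le ha (fun n => by positivity) N
    _ ≤ 6 * ((N : ℝ) ^ (1 - σ) / (1 - σ)) := by gcongr; exact sum_rpow_neg_le h0 h1 N
    _ = _ := by ring

theorem norm_logDeriv_add_mangoldtPoly_le {N : ℕ} (hN : 1 ≤ N) {z : ℂ} (hz : z.re = 3 / 2) :
    ‖logDeriv riemannZeta z + mangoldtPoly N z‖ ≤ 18 * (N : ℝ) ^ (-(1 / 2) : ℝ) := by
  have hz1 : 1 < z.re := by rw [hz]; norm_num
  have hs := (ArithmeticFunction.LSeriesSummable_vonMangoldt hz1).hasSum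
  have hs := (hasSum_nat_add_iff' (N + 1)).mpr hs
  have hterm : ∀ n : ℕ, LSeries.term (fun n => (Λ n : ℂ)) z (n + 1)
      = (Λ (n + 1) : ℂ) * ((n : ℂ) + 1) ^ (-z) := by
    intro n
    rw [LSeries.term_of_ne_zero (Nat.succ_ne_zero n), cpow_neg, div_eq_mul_inv]
    push_cast
    rfl
  have hnorm : ∀ n : ℕ, ‖LSeries.term (fun n => (Λ n : ℂ)) z (n + (N + 1))‖
      = Λ (N + n + 1) * ((N : ℝ) + n + 1) ^ (-(3 / 2) : ℝ) := by
    intro n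
    rw [show n + (N + 1) = N + n + 1 by ring, hterm, norm_mul, norm_natCast_add_one_cpow,
      Complex.norm_real, Real.norm_of_nonneg ArithmeticFunction.vonMangoldt_nonneg, neg_re, hz]
    push_cast
    rfl
  have e : logDeriv riemannZeta z + mangoldtPoly N z
      = -(∑' n, LSeries.term (fun n => (Λ n : ℂ)) z (n + (N + 1))) := by
    rw [hs.tsum_eq, Finset.sum_range_succ']
    have h1 := ArithmeticFunction.LSeries_vonMangoldt_eq_deriv_riemannZeta_div hz1
    rw [LSeries] at h1
    simp only [hterm, LSeries.term_zero]
    rw [h1, mangoldtPoly, logDeriv_apply]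
    ring
  rw [e, norm_neg]
  have hsn : Summable fun n => ‖LSeries.term (fun n => (Λ n : ℂ)) z (n + (N + 1))‖ :=
    hs.summable.norm
  refine (norm_tsum_le_tsum_norm hsn).trans ?_
  refine hsn.tsum_le_of_sum_range_le fun K => ?_
  simp only [hnorm]
  exact sum_vonMangoldt_tail_le hN K

end

/-! ### Interpolation in the strip -/

theorem riemannZeta₁_ne_zero_of_half_lt_re (hRH : RiemannHypothesis) {z : ℂ} (hz : 1 / 2 < z.re) :
    riemannZeta₁ z ≠ 0 := fun h => by
  have := riemannZeta₁_zero_re hRH (by linarith) h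
  linarith

theorem logDeriv_riemannZeta₁_eq {z : ℂ} (hz1 : z ≠ 1) (h0 : riemannZeta₁ z ≠ 0) :
    (z - 1) * logDeriv riemannZeta₁ z = (z - 1) * logDeriv riemannZeta z + 1 := by
  have hz : z - 1 ≠ 0 := sub_ne_zero.mpr hz1
  rw [logDeriv_apply, logDeriv_apply, deriv_riemannZeta_eq_neg_inv_sub_sq_mul_add hz1,
    riemannZeta_eq_inv_sub_mul hz1]
  field_simp
  ring

/-- A holomorphic function of nearly real values whose real part is at least
`C (log (|Im z| + 3) + L)` on `Re z > 0`. Its imaginary part is bounded by `π C`, through the argument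
of `z + 3`. -/
noncomputable def logMajorant (C L : ℝ) (z : ℂ) : ℂ := C * (2 * Complex.log (z + 3) + L)

theorem logMajorant_re (C L : ℝ) (z : ℂ) :
    (logMajorant C L z).re = C * (2 * Real.log ‖z + 3‖ + L) := by
  simp [logMajorant, Complex.log_re]

theorem le_logMajorant_re {C L : ℝ} (hC : 0 ≤ C) {z : ℂ} (hz : 0 < z.re) :
    C * Real.log (|z.im| + 3) + C * L ≤ (logMajorant C L z).re := by
  rw [logMajorant_re, ← mul_add]
  have h : |z.im| + 3 ≤ ‖z + 3‖ ^ 2 := by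
    rw [Complex.sq_norm, Complex.normSq_apply]
    simp
    nlinarith [sq_nonneg (|z.im| - 1 / 2), sq_abs z.im]
  have := Real.log_le_log (by positivity) h
  rw [Real.log_pow] at this
  push_cast at this
  gcongr

theorem norm_logMajorant_le {C L : ℝ} (hC : 0 ≤ C) (hL : 1 ≤ L) {z : ℂ} (hz : 0 < z.re) :
    ‖logMajorant C L z‖ ≤ (logMajorant C L z).re + 4 * C := by
  have h1 : 0 ≤ (logMajorant C L z).re := by
    have := le_logMajorant_re (L := L) hC hz
    have := one_le_log_abs_add_three z.im
    have : 0 ≤ C * Real.log (|z.im| + 3) + C * L := by positivity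
    linarith
  have h2 : |(logMajorant C L z).im| ≤ 4 * C := by
    have e : (logMajorant C L z).im = C * (2 * (z + 3).arg) := by
      simp [logMajorant, Complex.log_im]
    have h3 : |(z + 3).arg| ≤ Real.pi / 2 :=
      Complex.abs_arg_le_pi_div_two_iff.mpr (by simp; linarith)
    rw [e, abs_mul, abs_mul, abs_of_nonneg hC, abs_two]
    have := Real.pi_lt_four
    nlinarith
  have := Complex.norm_le_abs_re_add_abs_im (logMajorant C L z)
  rw [abs_of_nonneg h1] at this
  linarith

theorem norm_sub_one_le_norm_add_one {z : ℂ} (hz : 0 ≤ z.re) : ‖z - 1‖ ≤ ‖z + 1‖ := by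
  refine abs_le_of_sq_le_sq' ?_ (norm_nonneg _) |>.2
  rw [Complex.sq_norm, Complex.sq_norm, Complex.normSq_apply, Complex.normSq_apply]
  simp
  nlinarith

/-- The function to which the three lines theorem is applied. Since `F = ζ'/ζ` satisfies
`(z - 1) logDeriv ζ₁ z - 1 = (z - 1) F(z)`, this is
`(z - 1)/(z + 1) * (F + mangoldtPoly N)/(logDeriv ζ₁ + 2 logMajorant)`, written so as to be holomorphic
at `z = 1`. The denominator has positive real part and dominates `logDeriv ζ₁`, so the quotient is bounded
up to the critical line although `F` itself is not. -/
noncomputable def stripQuotient (C L : ℝ) (N : ℕ) (z : ℂ) : ℂ :=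
  ((z - 1) * (logDeriv riemannZeta₁ z + mangoldtPoly N z) - 1) /
    ((z + 1) * (logDeriv riemannZeta₁ z + 2 * logMajorant C L z))

/-- Where `Re (ζ₁'/ζ₁) ≥ -C log τ`, adding `2 logMajorant` pushes the values into the right half-plane, away
from `0`; and since `logMajorant` is comparable to its real part, nothing cancels. -/
theorem denominator_bounds {C L : ℝ} (hC1 : 1 ≤ C) (hL : 1 ≤ L) {z : ℂ} (hz : 0 < z.re)
    (hb : -(C * Real.log (|z.im| + 3)) ≤ (logDeriv riemannZeta₁ z).re) :
    L ≤ ‖logDeriv riemannZeta₁ z + 2 * logMajorant C L z‖ ∧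
    ‖logDeriv riemannZeta₁ z‖ ≤ 11 * ‖logDeriv riemannZeta₁ z + 2 * logMajorant C L z‖ := by
  have hC0 : 0 ≤ C := by linarith
  have h1 := le_logMajorant_re (L := L) hC0 hz
  have h2 := norm_logMajorant_le hC0 hL hz
  have hl := one_le_log_abs_add_three z.im
  set G := logDeriv riemannZeta₁ z + 2 * logMajorant C L z with hG
  have hGre : G.re = (logDeriv riemannZeta₁ z).re + 2 * (logMajorant C L z).re := by
    simp [hG]
  have h3 : (logMajorant C L z).re ≤ ‖G‖ := by
    have := Complex.re_le_norm G
    have : 0 ≤ C * L := by positivity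
    linarith
  have h4 : 0 ≤ C * Real.log (|z.im| + 3) := by positivity
  have h5 : C ≤ C * L := by nlinarith
  have h6 : L ≤ C * L := by nlinarith
  refine ⟨by linarith, ?_⟩
  have h7 : ‖logDeriv riemannZeta₁ z‖ ≤ ‖G‖ + 2 * ‖logMajorant C L z‖ := by
    have e : logDeriv riemannZeta₁ z = G - 2 * logMajorant C L z := by rw [hG]; ring
    rw [e]
    refine (norm_sub_le _ _).trans (by simp)
  linarith

theorem norm_stripQuotient_le {C L : ℝ} (hC1 : 1 ≤ C) (hL : 1 ≤ L) {N : ℕ}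
    (hN : (N : ℝ) ≤ 2 * L ^ 2) {z : ℂ} (hz : 1 / 2 < z.re)
    (hb : -(C * Real.log (|z.im| + 3)) ≤ (logDeriv riemannZeta₁ z).re) :
    ‖stripQuotient C L N z‖ ≤ 36 := by
  obtain ⟨h1, h2⟩ := denominator_bounds hC1 hL (by linarith) hb
  rw [stripQuotient]
  set G := logDeriv riemannZeta₁ z + 2 * logMajorant C L z with hG
  have hP : ‖mangoldtPoly N z‖ ≤ 24 * L := by
    refine (norm_mangoldtPoly_le (σ := 1 / 2) (by norm_num) (by norm_num) N hz.le).trans ?_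
    have : (N : ℝ) ^ (1 - 1 / 2 : ℝ) ≤ 2 * L := by
      rw [show (1 - 1 / 2 : ℝ) = 1 / 2 by norm_num, ← Real.sqrt_eq_rpow]
      exact Real.sqrt_le_iff.mpr ⟨by linarith, by nlinarith⟩
    norm_num at this ⊢
    linarith
  have hz1 : 1 ≤ ‖z + 1‖ := by
    have := Complex.re_le_norm (z + 1)
    simp at this
    linarith
  have hz2 := norm_sub_one_le_norm_add_one (z := z) (by linarith)
  rw [norm_div, norm_mul, div_le_iff₀ (mul_pos (by linarith) (by linarith))]
  have h3 : ‖logDeriv riemannZeta₁ z + mangoldtPoly N z‖ ≤ 35 * ‖G‖ :=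
    (norm_add_le _ _).trans (by linarith)
  have h4 : ‖z - 1‖ * ‖logDeriv riemannZeta₁ z + mangoldtPoly N z‖ ≤ ‖z + 1‖ * (35 * ‖G‖) := by
    gcongr
  have h5 : 1 ≤ ‖z + 1‖ * ‖G‖ := one_le_mul_of_one_le_of_one_le hz1 (hL.trans h1)
  refine (norm_sub_le _ _).trans ?_
  rw [norm_mul, norm_one]
  linarith

theorem norm_stripQuotient_le_right {C L : ℝ} (hRH : RiemannHypothesis) (hC1 : 1 ≤ C)
    (hL : 1 ≤ L) {N : ℕ} (hN1 : 1 ≤ N) (hN : (N : ℝ) ≤ 2 * L ^ 2) {z : ℂ} (hz : z.re = 3 / 2)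
    (hb : -(C * Real.log (|z.im| + 3)) ≤ (logDeriv riemannZeta₁ z).re) :
    ‖stripQuotient C L N z‖ ≤ 36 / N := by
  obtain ⟨h1, h2⟩ := denominator_bounds hC1 hL (by linarith) hb
  rw [stripQuotient]
  set G := logDeriv riemannZeta₁ z + 2 * logMajorant C L z with hG
  have hN0 : (0 : ℝ) < N := by exact_mod_cast hN1
  have hz1 : z ≠ 1 := by rintro rfl; norm_num at hz
  have e : (z - 1) * (logDeriv riemannZeta₁ z + mangoldtPoly N z) - 1
      = (z - 1) * (logDeriv riemannZeta z + mangoldtPoly N z) := by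
    rw [mul_add, logDeriv_riemannZeta₁_eq hz1
      (riemannZeta₁_ne_zero_of_half_lt_re hRH (by linarith))]
    ring
  have h3 := norm_logDeriv_add_mangoldtPoly_le hN1 hz
  have hz2 := norm_sub_one_le_norm_add_one (z := z) (by linarith)
  have hz3 : 0 < ‖z + 1‖ := by
    have := Complex.re_le_norm (z + 1)
    simp at this
    linarith
  have h4 : √N ≤ 2 * L := Real.sqrt_le_iff.mpr ⟨by linarith, by nlinarith⟩
  have h5 : (N : ℝ) ^ (-(1 / 2) : ℝ) ≤ 2 * L / N := by
    rw [Real.rpow_neg hN0.le, ← Real.sqrt_eq_rpow, ← one_div, div_le_div_iff₀ (by positivity) hN0]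
    nlinarith [Real.mul_self_sqrt hN0.le, Real.sqrt_nonneg (N : ℝ)]
  rw [e, norm_div, norm_mul, norm_mul, div_le_iff₀ (mul_pos hz3 (by linarith))]
  calc ‖z - 1‖ * ‖logDeriv riemannZeta z + mangoldtPoly N z‖
      ≤ ‖z + 1‖ * (18 * (2 * L / N)) := by gcongr; linarith
    _ ≤ ‖z + 1‖ * (18 * (2 * ‖G‖ / N)) := by gcongr
    _ = 36 / N * (‖z + 1‖ * ‖G‖) := by ring

theorem differentiableAt_stripQuotient {C L : ℝ} (hRH : RiemannHypothesis) (hC1 : 1 ≤ C)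
    (hL : 1 ≤ L) (N : ℕ) {z : ℂ} (hz : 1 / 2 < z.re)
    (hb : -(C * Real.log (|z.im| + 3)) ≤ (logDeriv riemannZeta₁ z).re) :
    DifferentiableAt ℂ (stripQuotient C L N) z := by
  obtain ⟨h1, -⟩ := denominator_bounds hC1 hL (by linarith) hb
  have hF : DifferentiableAt ℂ (logDeriv riemannZeta₁) z := by
    refine DifferentiableAt.div ?_ (differentiable_riemannZeta₁ z)
      (riemannZeta₁_ne_zero_of_half_lt_re hRH hz)
    exact (differentiable_riemannZeta₁.contDiff (n := 2)).differentiable_deriv_two z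
  have hA : DifferentiableAt ℂ (logMajorant C L) z := by
    unfold logMajorant
    have : z + 3 ∈ slitPlane := Or.inl (by simp; linarith)
    have hl : DifferentiableAt ℂ (fun w : ℂ => Complex.log (w + 3)) z :=
      DifferentiableAt.clog (f := fun w : ℂ => w + 3) (by fun_prop) this
    exact ((hl.const_mul _).add_const _).const_mul _
  have hP := differentiable_mangoldtPoly N z
  unfold stripQuotient
  refine DifferentiableAt.div ?_ ?_ ?_
  · exact ((differentiableAt_id.sub_const _).mul (hF.add hP)).sub_const _
  · exact (differentiableAt_id.add_const _).mul (hF.add (hA.const_mul _))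
  · refine mul_ne_zero ?_ (norm_pos_iff.mp (by linarith))
    intro h
    have := congrArg Complex.re h
    simp at this
    linarith

/-- Three lines between `Re z = u` and `Re z = 3/2`, then `u → 1/2`. -/
theorem norm_stripQuotient_interp {C L : ℝ} (hRH : RiemannHypothesis) (hC1 : 1 ≤ C) (hL : 1 ≤ L)
    (hC : ∀ z : ℂ, 1 / 2 < z.re → z.re ≤ 3 / 2 →
      -(C * Real.log (|z.im| + 3)) ≤ (logDeriv riemannZeta₁ z).re)
    {N : ℕ} (hN1 : 1 ≤ N) (hN : (N : ℝ) ≤ 2 * L ^ 2) {z : ℂ}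
    (hz : 1 / 2 < z.re) (hz2 : z.re ≤ 3 / 2) :
    ‖stripQuotient C L N z‖ ≤ 36 * (N : ℝ) ^ (1 / 2 - z.re) := by
  have hN0 : (0 : ℝ) < N := by exact_mod_cast hN1
  have step : ∀ u : ℝ, 1 / 2 < u → u < z.re →
      ‖stripQuotient C L N z‖ ≤ 36 * (N : ℝ) ^ (-((z.re - u) / (3 / 2 - u))) := by
    intro u hu hu2
    have hbd : ∀ w : ℂ, u ≤ w.re → w.re ≤ 3 / 2 → ‖stripQuotient C L N w‖ ≤ 36 :=
      fun w h1 h2 => norm_stripQuotient_le hC1 hL hN (by linarith) (hC w (by linarith) h2)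
    have hcl : closure (HadamardThreeLines.verticalStrip u (3 / 2))
        ⊆ HadamardThreeLines.verticalClosedStrip u (3 / 2) :=
      closure_minimal (Set.preimage_mono Set.Ioo_subset_Icc_self)
        (isClosed_Icc.preimage Complex.continuous_re)
    have key := HadamardThreeLines.norm_le_interp_of_mem_verticalClosedStrip'
      (f := stripQuotient C L N) (l := u) (u := 3 / 2) (a := 36) (b := 36 / N) (z := z)
      (by linarith) ⟨hu2.le, hz2⟩
      (DifferentiableOn.diffContOnCl fun w hw => by
        obtain ⟨h1, h2⟩ := hcl hw
        exact (differentiableAt_stripQuotient hRH hC1 hL N (by linarith)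
          (hC w (by linarith) h2)).differentiableWithinAt)
      ⟨36, by
        rintro _ ⟨w, ⟨h1, h2⟩, rfl⟩
        exact hbd w h1 h2⟩
      (fun w hw => by
        have hw : w.re = u := hw
        exact hbd w hw.ge (by linarith))
      (fun w hw => by
        have hw : w.re = 3 / 2 := hw
        exact norm_stripQuotient_le_right hRH hC1 hL hN1 hN hw
          (hC w (by linarith) (by linarith)))
    refine key.trans (le_of_eq ?_)
    rw [Real.div_rpow (by norm_num) hN0.le, Real.rpow_sub (by norm_num), Real.rpow_one,
      Real.rpow_neg hN0.le]
    have : (0 : ℝ) < 36 ^ ((z.re - u) / (3 / 2 - u)) := by positivity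
    field_simp
  have hlim : Filter.Tendsto (fun u : ℝ => 36 * (N : ℝ) ^ (-((z.re - u) / (3 / 2 - u))))
      (nhdsWithin (1 / 2) (Set.Ioi (1 / 2))) (nhds (36 * (N : ℝ) ^ (1 / 2 - z.re))) := by
    have hc : ContinuousAt (fun u : ℝ => 36 * (N : ℝ) ^ (-((z.re - u) / (3 / 2 - u)))) (1 / 2) := by
      refine continuousAt_const.mul (ContinuousAt.rpow continuousAt_const ?_ (Or.inl hN0.ne'))
      refine (ContinuousAt.div (by fun_prop) (by fun_prop) (by norm_num)).neg
    have := hc.tendsto.mono_left (nhdsWithin_le_nhds (s := Set.Ioi (1 / 2)))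
    convert this using 4
    norm_num
  refine ge_of_tendsto hlim ?_
  filter_upwards [Ioo_mem_nhdsGT hz] with u hu
  exact step u hu.1 hu.2

/-- Assuming RH: with `τ = |t| + 3`, the bound
`|(ζ'/ζ)(σ+it)| ≪ (log τ)^{2−2σ}` holds uniformly for `5/8 ≤ σ ≤ 7/8`. -/
theorem logDeriv_zeta_bound_in_strip (hRH : RiemannHypothesis) :
    ∃ C : ℝ, ∀ σ t : ℝ, 5 / 8 ≤ σ → σ ≤ 7 / 8 →
      ‖deriv riemannZeta (σ + t * I) / riemannZeta (σ + t * I)‖ ≤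
        C * Real.log (|t| + 3) ^ (2 - 2 * σ) := by
  obtain ⟨C, hC1, hC⟩ := exists_logDeriv_riemannZeta₁_bounds hRH
  have hC0 : 0 ≤ C := by linarith
  refine ⟨16524 * C + 96, fun σ t h1 h2 => ?_⟩
  set z : ℂ := σ + t * I with hz
  have hre : z.re = σ := by simp [hz]
  have him : z.im = t := by simp [hz]
  set L := Real.log (|t| + 3) with hLdef
  have hL : 1 ≤ L := one_le_log_abs_add_three t
  -- The length `L²` balances the polynomial, of size `N^{1-σ}`, against the remainder `L N^{1/2-σ}`.
  set N : ℕ := ⌈L ^ 2⌉₊ with hNdef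
  have hNge : L ^ 2 ≤ N := Nat.le_ceil _
  have hNle : (N : ℝ) ≤ 2 * L ^ 2 := by
    have := (Nat.ceil_lt_add_one (sq_nonneg L)).le
    rw [← hNdef] at this
    nlinarith
  have hN1 : 1 ≤ N := by
    have : (1 : ℝ) ≤ N := by nlinarith
    exact_mod_cast this
  have hQ := norm_stripQuotient_interp hRH hC1 hL (fun w h1 h2 => (hC w h1 h2).1) hN1 hNle
    (z := z) (by rw [hre]; linarith) (by rw [hre]; linarith)
  obtain ⟨hb, hF⟩ := hC z (by rw [hre]; linarith) (by rw [hre]; linarith)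
  obtain ⟨hG, -⟩ := denominator_bounds hC1 hL (by rw [hre]; linarith) hb
  rw [hre, him, ← hLdef] at hF
  rw [hre] at hQ
  have hA := norm_logMajorant_le hC0 hL (z := z) (by rw [hre]; linarith)
  have hAre : (logMajorant C L z).re ≤ 5 * (C * L) := by
    have h3 : ‖z + 3‖ ≤ (|t| + 3) ^ 2 := by
      have h4 := Complex.norm_le_abs_re_add_abs_im (z + 3)
      have h5 : (z + 3).re = σ + 3 := by simp [hre]
      have h6 : (z + 3).im = t := by simp [him]
      rw [h5, h6, abs_of_nonneg (by linarith)] at h4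
      nlinarith [abs_nonneg t]
    have h4 : 0 < ‖z + 3‖ := by
      have := Complex.re_le_norm (z + 3)
      simp [hre] at this
      linarith
    have h5 := Real.log_le_log h4 h3
    rw [Real.log_pow, ← hLdef] at h5
    push_cast at h5
    rw [logMajorant_re]
    have : 2 * Real.log ‖z + 3‖ + L ≤ 5 * L := by linarith
    nlinarith
  set G := logDeriv riemannZeta₁ z + 2 * logMajorant C L z with hGdef
  have hGle : ‖G‖ ≤ 27 * (C * L) := by
    have h3 : ‖G‖ ≤ ‖logDeriv riemannZeta₁ z‖ + 2 * ‖logMajorant C L z‖ := by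
      refine (norm_add_le _ _).trans (by simp)
    have h4 : 1 / (σ - 1 / 2) ≤ 8 := by
      rw [div_le_iff₀ (by linarith)]; linarith
    have h5 : C * L * (1 + 1 / (σ - 1 / 2)) ≤ C * L * 9 := by gcongr; linarith
    have h6 : C ≤ C * L := by nlinarith
    linarith
  have hz1 : z ≠ 1 := by
    intro h
    have := congrArg Complex.re h
    rw [hre, one_re] at this
    linarith
  have hzd : 1 / 8 ≤ ‖z - 1‖ := by
    have := Complex.abs_re_le_norm (z - 1)
    have h3 := neg_abs_le (z - 1).re
    rw [sub_re, hre, one_re] at this h3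
    linarith
  have hzs : ‖z + 1‖ ≤ 17 * ‖z - 1‖ := by
    have : ‖z + 1‖ ≤ ‖z - 1‖ + ‖(2 : ℂ)‖ := by
      rw [show z + 1 = (z - 1) + 2 by ring]; exact norm_add_le _ _
    rw [Complex.norm_two] at this
    linarith
  have hz1n : z + 1 ≠ 0 := by
    intro h
    have := congrArg Complex.re h
    simp [hre] at this
    linarith
  have hGn : G ≠ 0 := norm_pos_iff.mp (by linarith)
  have e : (z - 1) * (logDeriv riemannZeta z + mangoldtPoly N z)
      = stripQuotient C L N z * ((z + 1) * G) := by
    rw [stripQuotient, ← hGdef, div_mul_cancel₀ _ (mul_ne_zero hz1n hGn), mul_add, mul_add,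
      logDeriv_riemannZeta₁_eq hz1
      (riemannZeta₁_ne_zero_of_half_lt_re hRH (by rw [hre]; linarith))]
    ring
  have hL0 : 0 < L := by linarith
  have hpow : L * (N : ℝ) ^ (1 / 2 - σ) ≤ L ^ (2 - 2 * σ) := by
    have h3 : (N : ℝ) ^ (1 / 2 - σ) ≤ (L ^ 2) ^ (1 / 2 - σ) :=
      Real.rpow_le_rpow_of_nonpos (by positivity) hNge (by linarith)
    have h4 : L * (L ^ 2) ^ (1 / 2 - σ) = L ^ (2 - 2 * σ) := by
      rw [← Real.rpow_natCast, ← Real.rpow_mul hL0.le, mul_comm, ← Real.rpow_add_one hL0.ne']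
      congr 1
      push_cast
      ring
    rw [← h4]
    gcongr
  have hS : ‖logDeriv riemannZeta z + mangoldtPoly N z‖ ≤ 16524 * C * L ^ (2 - 2 * σ) := by
    have h3 := congrArg norm e
    rw [norm_mul, norm_mul, norm_mul] at h3
    have h4 : ‖z - 1‖ * ‖logDeriv riemannZeta z + mangoldtPoly N z‖
        ≤ ‖z - 1‖ * (16524 * C * L ^ (2 - 2 * σ)) := by
      rw [h3]
      calc _ ≤ 36 * (N : ℝ) ^ (1 / 2 - σ) * (17 * ‖z - 1‖ * (27 * (C * L))) := by gcongr
        _ = ‖z - 1‖ * (16524 * C * (L * (N : ℝ) ^ (1 / 2 - σ))) := by ring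
        _ ≤ _ := by gcongr
    exact le_of_mul_le_mul_left h4 (by linarith)
  have hP : ‖mangoldtPoly N z‖ ≤ 96 * L ^ (2 - 2 * σ) := by
    refine (norm_mangoldtPoly_le (σ := σ) (by linarith) (by linarith) N hre.ge).trans ?_
    have h3 : 6 / (1 - σ) ≤ 48 := by
      rw [div_le_iff₀ (by linarith)]; linarith
    have h4 : (N : ℝ) ^ (1 - σ) ≤ 2 * L ^ (2 - 2 * σ) := by
      calc (N : ℝ) ^ (1 - σ) ≤ (2 * L ^ 2) ^ (1 - σ) := by gcongr; linarith
        _ = 2 ^ (1 - σ) * L ^ (2 - 2 * σ) := by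
          rw [Real.mul_rpow (by norm_num) (by positivity), ← Real.rpow_natCast L 2,
            ← Real.rpow_mul hL0.le]
          congr 2
          push_cast
          ring
        _ ≤ 2 ^ (1 : ℝ) * L ^ (2 - 2 * σ) := by
          gcongr
          · norm_num
          · linarith
        _ = _ := by rw [Real.rpow_one]
    calc _ ≤ 48 * (2 * L ^ (2 - 2 * σ)) := by gcongr
      _ = _ := by ring
  have : logDeriv riemannZeta z
      = (logDeriv riemannZeta z + mangoldtPoly N z) - mangoldtPoly N z := by ring
  rw [← logDeriv_apply, this]
  refine (norm_sub_le _ _).trans ?_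
  linarith
end
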